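/- arXiv:1501.02424 — 3 statements merged into one kernel-verified Lean document; each statement's English description precedes it below -/
import Mathlib

section
/- There exists a constant C > 0, independent of h, the center of K, u and v, such that for every h > 0, every square K of half side h, every function u of class C⁴ on a neighborhood of K, and every v in the shape space P(K) = P₂(K) + span{x₁³, x₂³}, one has |(h²/3)∫_K (∂³u/∂x₁∂x₂²)(∂³v/∂x₁³) dx + (h²/3)∫_K (∂³u/∂x₁²∂x₂)(∂³v/∂x₂³) dx + a ∫_K ∂³v/∂x₁³ dx + b ∫_K ∂³v/∂x₂³ dx| ≤ C h² |u|_{H⁴(K)} |v|_{H²(K)}, where a = −(h/6)∫_{x₂c−h}^{x₂c+h} (∂³u/∂x₁∂x₂²)(x₁c+h, x₂) dx₂ and b = −(h/6)∫_{x₁c−h}^{x₁c+h} (∂³u/∂x₁²∂x₂)(x₁, x₂c−h) dx₁. -/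
open MeasureTheory

/-- Partial derivative in the first variable of a curried function on `ℝ²`. -/
noncomputable def pdx (f : ℝ → ℝ → ℝ) : ℝ → ℝ → ℝ := fun x y => deriv (fun t => f t y) x

/-- Partial derivative in the second variable of a curried function on `ℝ²`. -/
noncomputable def pdy (f : ℝ → ℝ → ℝ) : ℝ → ℝ → ℝ := fun x y => deriv (fun t => f x t) y

/-- Membership in the shape space `P(K) = P₂(K) + span{x₁³, x₂³}` of the two-dimensional
rectangular Morley element. -/
def MorleyShape2 (w : ℝ → ℝ → ℝ) : Prop :=
  ∃ c0 c1 c2 c3 c4 c5 c6 c7 : ℝ, ∀ x y : ℝ,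
    w x y = c0 + c1 * x + c2 * y + c3 * x ^ 2 + c4 * (x * y) + c5 * y ^ 2
      + c6 * x ^ 3 + c7 * y ^ 3

/-- The `H²` seminorm of `v` on the rectangle `[a,b] × [c,d]`, each ordering of mixed
partial derivatives counted. -/
noncomputable def semiH2R (v : ℝ → ℝ → ℝ) (a b c d : ℝ) : ℝ :=
  Real.sqrt (∫ x in a..b, ∫ y in c..d,
    (pdx (pdx v) x y) ^ 2 + (pdx (pdy v) x y) ^ 2 + (pdy (pdx v) x y) ^ 2
      + (pdy (pdy v) x y) ^ 2)

/-- The `H⁴` seminorm of `u` on the rectangle `[a,b] × [c,d]`, each ordering of mixed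
partial derivatives counted (hence the binomial coefficients). -/
noncomputable def semiH4R (u : ℝ → ℝ → ℝ) (a b c d : ℝ) : ℝ :=
  Real.sqrt (∫ x in a..b, ∫ y in c..d,
    (pdx (pdx (pdx (pdx u))) x y) ^ 2 + 4 * (pdx (pdx (pdx (pdy u))) x y) ^ 2
      + 6 * (pdx (pdx (pdy (pdy u))) x y) ^ 2 + 4 * (pdx (pdy (pdy (pdy u))) x y) ^ 2
      + (pdy (pdy (pdy (pdy u))) x y) ^ 2)

/-- `u` is of class `C⁴` on a neighborhood of the rectangle `[a,b] × [c,d]`. -/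
def C4Near (u : ℝ → ℝ → ℝ) (a b c d : ℝ) : Prop :=
  ∃ U : Set (ℝ × ℝ), IsOpen U ∧ Set.Icc a b ×ˢ Set.Icc c d ⊆ U ∧
    ContDiffOn ℝ 4 (fun p : ℝ × ℝ => u p.1 p.2) U

open Set Function

lemma aux_fx {f : ℝ → ℝ → ℝ} {U : Set (ℝ × ℝ)} (hU : IsOpen U) {n : WithTop ℕ∞}
    (hn : 1 ≤ n) (hf : ContDiffOn ℝ n (fun p : ℝ × ℝ => f p.1 p.2) U) {x y : ℝ} (hp : (x, y) ∈ U) :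
    HasDerivAt (fun t => f t y) (fderiv ℝ (fun p : ℝ × ℝ => f p.1 p.2) (x, y) (1, 0)) x := by
  have h1 : HasFDerivAt (fun p : ℝ × ℝ => f p.1 p.2) _ (x, y) :=
    ((hf.contDiffAt (hU.mem_nhds hp)).differentiableAt (by
      intro h; subst h; simp at hn)).hasFDerivAt
  have h2 : HasDerivAt (fun t : ℝ => (t, y)) (1, 0) x :=
    (hasDerivAt_id x).prodMk (hasDerivAt_const x y)
  exact h1.comp_hasDerivAt x h2

lemma aux_fy {f : ℝ → ℝ → ℝ} {U : Set (ℝ × ℝ)} (hU : IsOpen U) {n : WithTop ℕ∞}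
    (hn : 1 ≤ n) (hf : ContDiffOn ℝ n (fun p : ℝ × ℝ => f p.1 p.2) U) {x y : ℝ} (hp : (x, y) ∈ U) :
    HasDerivAt (fun t => f x t) (fderiv ℝ (fun p : ℝ × ℝ => f p.1 p.2) (x, y) (0, 1)) y := by
  have h1 : HasFDerivAt (fun p : ℝ × ℝ => f p.1 p.2) _ (x, y) :=
    ((hf.contDiffAt (hU.mem_nhds hp)).differentiableAt (by
      intro h; subst h; simp at hn)).hasFDerivAt
  have h2 : HasDerivAt (fun t : ℝ => (x, t)) (0, 1) y :=
    (hasDerivAt_const y x).prodMk (hasDerivAt_id y)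
  exact h1.comp_hasDerivAt y h2

lemma aux_pdx {f : ℝ → ℝ → ℝ} {U : Set (ℝ × ℝ)} (hU : IsOpen U) {n m : WithTop ℕ∞}
    (hn : m + 1 ≤ n) (hf : ContDiffOn ℝ n (fun p : ℝ × ℝ => f p.1 p.2) U) :
    ContDiffOn ℝ m (fun p : ℝ × ℝ => pdx f p.1 p.2) U := by
  have h1 : ContDiffOn ℝ m (fun p => fderiv ℝ (fun p : ℝ × ℝ => f p.1 p.2) p ((1 : ℝ), (0 : ℝ))) U :=
    (hf.fderiv_of_isOpen hU hn).clm_apply contDiffOn_const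
  refine h1.congr ?_
  rintro ⟨x, y⟩ hp
  exact (aux_fx hU (le_trans le_add_self hn) hf hp).deriv

lemma aux_pdy {f : ℝ → ℝ → ℝ} {U : Set (ℝ × ℝ)} (hU : IsOpen U) {n m : WithTop ℕ∞}
    (hn : m + 1 ≤ n) (hf : ContDiffOn ℝ n (fun p : ℝ × ℝ => f p.1 p.2) U) :
    ContDiffOn ℝ m (fun p : ℝ × ℝ => pdy f p.1 p.2) U := by
  have h1 : ContDiffOn ℝ m (fun p => fderiv ℝ (fun p : ℝ × ℝ => f p.1 p.2) p ((0 : ℝ), (1 : ℝ))) U :=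
    (hf.fderiv_of_isOpen hU hn).clm_apply contDiffOn_const
  refine h1.congr ?_
  rintro ⟨x, y⟩ hp
  exact (aux_fy hU (le_trans le_add_self hn) hf hp).deriv

lemma aux_hx {f : ℝ → ℝ → ℝ} {U : Set (ℝ × ℝ)} (hU : IsOpen U) {n : WithTop ℕ∞}
    (hn : 1 ≤ n) (hf : ContDiffOn ℝ n (fun p : ℝ × ℝ => f p.1 p.2) U) {x y : ℝ} (hp : (x, y) ∈ U) :
    HasDerivAt (fun t => f t y) (pdx f x y) x :=
  (aux_fx hU hn hf hp).differentiableAt.hasDerivAt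

lemma aux_hy {f : ℝ → ℝ → ℝ} {U : Set (ℝ × ℝ)} (hU : IsOpen U) {n : WithTop ℕ∞}
    (hn : 1 ≤ n) (hf : ContDiffOn ℝ n (fun p : ℝ × ℝ => f p.1 p.2) U) {x y : ℝ} (hp : (x, y) ∈ U) :
    HasDerivAt (fun t => f x t) (pdy f x y) y :=
  (aux_fy hU hn hf hp).differentiableAt.hasDerivAt

lemma aux_symm {f : ℝ → ℝ → ℝ} {U : Set (ℝ × ℝ)} (hU : IsOpen U) {n : WithTop ℕ∞}
    (hn : 2 ≤ n) (hf : ContDiffOn ℝ n (fun p : ℝ × ℝ => f p.1 p.2) U) {x y : ℝ} (hp : (x, y) ∈ U) :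
    pdy (pdx f) x y = pdx (pdy f) x y := by
  set F : ℝ × ℝ → ℝ := fun p => f p.1 p.2 with hF
  have hn1 : (1 : WithTop ℕ∞) ≤ n := le_trans (by norm_num) hn
  have hd : DifferentiableAt ℝ (fderiv ℝ F) (x, y) :=
    (((hf.fderiv_of_isOpen (m := 1) hU (by rw [one_add_one_eq_two]; exact hn)).contDiffAt
      (hU.mem_nhds hp)).differentiableAt (by simp))
  have hs : IsSymmSndFDerivAt ℝ F (x, y) :=
    (hf.contDiffAt (hU.mem_nhds hp)).isSymmSndFDerivAt (by simpa using hn)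
  have ex : ∀ᶠ t in nhds x, pdy f t y = fderiv ℝ F (t, y) (0, 1) := by
    have : ∀ᶠ t in nhds x, (t, y) ∈ U :=
      (Continuous.prodMk_left y).continuousAt.preimage_mem_nhds (hU.mem_nhds hp)
    filter_upwards [this] with t ht
    exact (aux_fy hU hn1 hf ht).deriv
  have ey : ∀ᶠ t in nhds y, pdx f x t = fderiv ℝ F (x, t) (1, 0) := by
    have : ∀ᶠ t in nhds y, (x, t) ∈ U :=
      (Continuous.prodMk_right x).continuousAt.preimage_mem_nhds (hU.mem_nhds hp)
    filter_upwards [this] with t ht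
    exact (aux_fx hU hn1 hf ht).deriv
  have h1 : HasDerivAt (fun t => fderiv ℝ F (t, y) (0, 1))
      (fderiv ℝ (fderiv ℝ F) (x, y) (1, 0) (0, 1)) x := by
    have h2 : HasDerivAt (fun t : ℝ => (t, y)) (1, 0) x :=
      (hasDerivAt_id x).prodMk (hasDerivAt_const x y)
    have := (hd.hasFDerivAt.comp_hasDerivAt x h2)
    simpa using this.clm_apply (hasDerivAt_const x ((0 : ℝ), (1 : ℝ)))
  have h1' : HasDerivAt (fun t => fderiv ℝ F (x, t) (1, 0))
      (fderiv ℝ (fderiv ℝ F) (x, y) (0, 1) (1, 0)) y := by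
    have h2 : HasDerivAt (fun t : ℝ => (x, t)) (0, 1) y :=
      (hasDerivAt_const y x).prodMk (hasDerivAt_id y)
    have := (hd.hasFDerivAt.comp_hasDerivAt y h2)
    simpa using this.clm_apply (hasDerivAt_const y ((1 : ℝ), (0 : ℝ)))
  have e1 : pdx (pdy f) x y = _ := (h1.congr_of_eventuallyEq ex).deriv
  have e2 : pdy (pdx f) x y = _ := (h1'.congr_of_eventuallyEq ey).deriv
  rw [e1, e2]
  exact hs _ _

lemma aux_clamp {f : ℝ → ℝ → ℝ} {a b c d : ℝ} (hab : a ≤ b) (hcd : c ≤ d)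
    (hf : ContinuousOn (fun p : ℝ × ℝ => f p.1 p.2) (Icc a b ×ˢ Icc c d)) :
    ∃ F : ℝ → ℝ → ℝ, Continuous (uncurry F) ∧
      ∀ x ∈ Icc a b, ∀ y ∈ Icc c d, F x y = f x y := by
  refine ⟨fun x y => f (max a (min b x)) (max c (min d y)), ?_, ?_⟩
  · refine hf.comp_continuous
      (f := fun p : ℝ × ℝ => (max a (min b p.1), max c (min d p.2))) (by fun_prop) ?_
    intro p
    exact ⟨⟨le_max_left _ _, max_le hab (min_le_left _ _)⟩,
      ⟨le_max_left _ _, max_le hcd (min_le_left _ _)⟩⟩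
  · intro x hx y hy
    simp [hx.1, hx.2, hy.1, hy.2]

lemma aux_congr {f g : ℝ → ℝ → ℝ} {a b c d : ℝ} (hab : a ≤ b) (hcd : c ≤ d)
    (h : ∀ x ∈ Icc a b, ∀ y ∈ Icc c d, f x y = g x y) :
    (∫ x in a..b, ∫ y in c..d, f x y) = ∫ x in a..b, ∫ y in c..d, g x y := by
  refine intervalIntegral.integral_congr fun x hx => intervalIntegral.integral_congr fun y hy => ?_
  rw [uIcc_of_le hab] at hx
  rw [uIcc_of_le hcd] at hy
  exact h x hx y hy

lemma aux_ii1 {f : ℝ → ℝ → ℝ} (hf : Continuous (uncurry f)) (x c d : ℝ) :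
    IntervalIntegrable (fun y => f x y) volume c d :=
  (hf.comp (Continuous.prodMk_right x)).intervalIntegrable _ _

lemma aux_ii2 {f : ℝ → ℝ → ℝ} (hf : Continuous (uncurry f)) (a b c d : ℝ) :
    IntervalIntegrable (fun x => ∫ y in c..d, f x y) volume a b :=
  (intervalIntegral.continuous_parametric_intervalIntegral_of_continuous' hf c d).intervalIntegrable _ _

lemma aux_mono {f g : ℝ → ℝ → ℝ} {a b c d : ℝ} (hab : a ≤ b) (hcd : c ≤ d)
    (hf : Continuous (uncurry f)) (hg : Continuous (uncurry g))
    (h : ∀ x ∈ Icc a b, ∀ y ∈ Icc c d, f x y ≤ g x y) :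
    (∫ x in a..b, ∫ y in c..d, f x y) ≤ ∫ x in a..b, ∫ y in c..d, g x y :=
  intervalIntegral.integral_mono_on hab (aux_ii2 hf _ _ _ _) (aux_ii2 hg _ _ _ _) fun x hx =>
    intervalIntegral.integral_mono_on hcd (aux_ii1 hf _ _ _) (aux_ii1 hg _ _ _) fun y hy =>
      h x hx y hy

lemma aux_monoOn {f g : ℝ → ℝ → ℝ} {a b c d : ℝ} (hab : a ≤ b) (hcd : c ≤ d)
    (hf : ContinuousOn (fun p : ℝ × ℝ => f p.1 p.2) (Icc a b ×ˢ Icc c d))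
    (hg : ContinuousOn (fun p : ℝ × ℝ => g p.1 p.2) (Icc a b ×ˢ Icc c d))
    (h : ∀ x ∈ Icc a b, ∀ y ∈ Icc c d, f x y ≤ g x y) :
    (∫ x in a..b, ∫ y in c..d, f x y) ≤ ∫ x in a..b, ∫ y in c..d, g x y := by
  obtain ⟨F, hF, hFf⟩ := aux_clamp hab hcd hf
  obtain ⟨G, hG, hGg⟩ := aux_clamp hab hcd hg
  rw [← aux_congr hab hcd hFf, ← aux_congr hab hcd hGg]
  refine aux_mono hab hcd hF hG fun x hx y hy => ?_
  rw [hFf x hx y hy, hGg x hx y hy]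
  exact h x hx y hy

lemma aux_swap {f : ℝ → ℝ → ℝ} {a b c d : ℝ} (hab : a ≤ b) (hcd : c ≤ d)
    (hf : ContinuousOn (fun p : ℝ × ℝ => f p.1 p.2) (Icc a b ×ˢ Icc c d)) :
    (∫ x in a..b, ∫ y in c..d, f x y) = ∫ y in c..d, ∫ x in a..b, f x y := by
  simp only [intervalIntegral.integral_of_le hab, intervalIntegral.integral_of_le hcd]
  refine integral_integral_swap ?_
  rw [Measure.prod_restrict]
  exact (hf.integrableOn_compact (isCompact_Icc.prod isCompact_Icc)).mono_set
    (prod_mono Ioc_subset_Icc_self Ioc_subset_Icc_self)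

/-- Cauchy-Schwarz against the constant one. -/
lemma aux_cs {G : ℝ → ℝ → ℝ} {a b c d : ℝ} (hab : a < b) (hcd : c < d)
    (hG : Continuous (uncurry G)) :
    (∫ x in a..b, ∫ y in c..d, |G x y|) ^ 2
      ≤ (b - a) * (d - c) * ∫ x in a..b, ∫ y in c..d, G x y ^ 2 := by
  have hA : Continuous (uncurry fun x y => |G x y|) := hG.abs
  have hS : Continuous (uncurry fun x y => G x y ^ 2) := hG.pow 2
  have hk : ∀ m : ℝ, 2 * m * (∫ x in a..b, ∫ y in c..d, |G x y|)
      ≤ (∫ x in a..b, ∫ y in c..d, G x y ^ 2) + (b - a) * ((d - c) * m ^ 2) := by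
    intro m
    have h1 := aux_mono hab.le hcd.le (f := fun x y => (2 * m) * |G x y|)
      (g := fun x y => G x y ^ 2 + m ^ 2)
      (continuous_const.mul hA) (by
        simp only [uncurry_def] at hG ⊢
        fun_prop) (fun x _ y _ => by
        have := sq_nonneg (|G x y| - m)
        have h2 := sq_abs (G x y)
        nlinarith)
    have h3 : (∫ x in a..b, ∫ y in c..d, G x y ^ 2 + m ^ 2) =
        (∫ x in a..b, ∫ y in c..d, G x y ^ 2) + (b - a) * ((d - c) * m ^ 2) := by
      have : ∀ x, (∫ y in c..d, G x y ^ 2 + m ^ 2) = (∫ y in c..d, G x y ^ 2) + (d - c) * m ^ 2 := by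
        intro x
        rw [intervalIntegral.integral_add (aux_ii1 hS x c d) (by simp)]
        simp
      simp only [this]
      rw [intervalIntegral.integral_add (aux_ii2 hS a b c d) (by simp)]
      simp
      ring
    rw [h3] at h1
    simpa [intervalIntegral.integral_const_mul] using h1
  set I := ∫ x in a..b, ∫ y in c..d, |G x y|
  set S := ∫ x in a..b, ∫ y in c..d, G x y ^ 2
  have hA0 : 0 < (b - a) * (d - c) := mul_pos (sub_pos.2 hab) (sub_pos.2 hcd)
  have := hk (I / ((b - a) * (d - c)))
  have e : (b - a) * ((d - c) * (I / ((b - a) * (d - c))) ^ 2) = I ^ 2 / ((b - a) * (d - c)) := by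
    have h1 := (sub_pos.2 hab).ne'
    have h2 := (sub_pos.2 hcd).ne'
    field_simp
  rw [e] at this
  have e2 : 2 * (I / ((b - a) * (d - c))) * I = 2 * (I ^ 2 / ((b - a) * (d - c))) := by ring
  rw [e2] at this
  have : I ^ 2 / ((b - a) * (d - c)) ≤ S := by linarith
  rw [div_le_iff₀ hA0] at this
  linarith

/-- The core estimate, integrating the differentiated variable inside. -/
lemma aux_core {w g : ℝ → ℝ → ℝ} {a b c d e : ℝ} (hab : a < b) (hcd : c < d) (he : e ∈ Icc c d)
    (hw : ContinuousOn (fun p : ℝ × ℝ => w p.1 p.2) (Icc a b ×ˢ Icc c d))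
    (hg : ContinuousOn (fun p : ℝ × ℝ => g p.1 p.2) (Icc a b ×ˢ Icc c d))
    (hd : ∀ x ∈ Icc a b, ∀ y ∈ Icc c d, HasDerivAt (fun t => w x t) (g x y) y) :
    ((∫ x in a..b, ∫ y in c..d, w x y) - (d - c) * ∫ x in a..b, w x e) ^ 2
      ≤ (d - c) ^ 2 * ((b - a) * (d - c) * ∫ x in a..b, ∫ y in c..d, g x y ^ 2) := by
  obtain ⟨W, hW, hWw⟩ := aux_clamp hab.le hcd.le hw
  obtain ⟨G, hG, hGg⟩ := aux_clamp hab.le hcd.le hg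
  have hA : Continuous (uncurry fun x y => |G x y|) := hG.abs
  rw [← aux_congr hab.le hcd.le hWw, ← aux_congr hab.le hcd.le
    (f := fun x y => G x y ^ 2) (g := fun x y => g x y ^ 2)
    (fun x hx y hy => by simp only [hGg x hx y hy])]
  have hWe : (∫ x in a..b, w x e) = ∫ x in a..b, W x e := by
    refine intervalIntegral.integral_congr fun x hx => ?_
    rw [uIcc_of_le hab.le] at hx
    exact (hWw x hx e he).symm
  rw [hWe]
  have hWec : Continuous fun x => W x e := hW.comp (Continuous.prodMk_left e)
  have hpt : ∀ x ∈ Icc a b, ∀ y ∈ Icc c d, |W x y - W x e| ≤ ∫ s in c..d, |G x s| := by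
    intro x hx y hy
    have hsub : uIcc e y ⊆ Icc c d := by
      rw [← uIcc_of_le hcd.le]
      exact uIcc_subset_uIcc (by rwa [uIcc_of_le hcd.le]) (by rwa [uIcc_of_le hcd.le])
    have h1 : ∫ s in e..y, G x s = w x y - w x e :=
      intervalIntegral.integral_eq_sub_of_hasDerivAt (f := fun t => w x t)
        (fun s hs => by rw [hGg x hx s (hsub hs)]; exact hd x hx s (hsub hs)) (aux_ii1 hG x e y)
    rw [hWw x hx y hy, hWw x hx e he, ← h1]
    refine (intervalIntegral.norm_integral_le_abs_integral_norm
      (f := fun s => G x s) (a := e) (b := y) (μ := volume)).trans ?_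
    refine (intervalIntegral.abs_integral_mono_interval (f := fun s => ‖G x s‖) (c := c) (d := d)
      ?_ (Filter.Eventually.of_forall fun s => norm_nonneg _) (aux_ii1 hA x c d)).trans ?_
    · rw [uIoc_of_le hcd.le]
      exact Ioc_subset_Ioc (le_min he.1 hy.1) (max_le he.2 hy.2)
    · rw [abs_of_nonneg (intervalIntegral.integral_nonneg hcd.le fun s _ => norm_nonneg _)]
      rfl
  have hx1 : ∀ x ∈ Icc a b,
      |(∫ y in c..d, W x y) - (d - c) * W x e| ≤ (d - c) * ∫ s in c..d, |G x s| := by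
    intro x hx
    have e1 : (∫ y in c..d, W x y) - (d - c) * W x e = ∫ y in c..d, (W x y - W x e) := by
      rw [intervalIntegral.integral_sub (aux_ii1 hW x c d) (by simp)]
      simp
    rw [e1]
    have := intervalIntegral.norm_integral_le_of_norm_le_const (a := c) (b := d)
      (f := fun y => W x y - W x e) (C := ∫ s in c..d, |G x s|) (fun y hy => by
        rw [uIoc_of_le hcd.le] at hy
        exact hpt x hx y (Ioc_subset_Icc_self hy))
    rw [abs_of_pos (sub_pos.2 hcd)] at this
    rw [mul_comm]
    exact this
  have hfin : |(∫ x in a..b, ∫ y in c..d, W x y) - (d - c) * ∫ x in a..b, W x e|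
      ≤ (d - c) * ∫ x in a..b, ∫ y in c..d, |G x y| := by
    have hi1 := aux_ii2 hW a b c d
    have hi2 : IntervalIntegrable (fun x => (d - c) * W x e) volume a b :=
      (continuous_const.mul hWec).intervalIntegrable _ _
    rw [← intervalIntegral.integral_const_mul, ← intervalIntegral.integral_sub hi1 hi2,
      ← intervalIntegral.integral_const_mul]
    refine (intervalIntegral.abs_integral_le_integral_abs hab.le).trans ?_
    exact intervalIntegral.integral_mono_on hab.le (hi1.sub hi2).abs
      ((aux_ii2 hA a b c d).const_mul _) hx1
  have hcs := aux_cs hab hcd hG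
  calc _ ≤ ((d - c) * ∫ x in a..b, ∫ y in c..d, |G x y|) ^ 2 := by
        rw [← sq_abs]; exact pow_le_pow_left₀ (abs_nonneg _) hfin 2
    _ = (d - c) ^ 2 * (∫ x in a..b, ∫ y in c..d, |G x y|) ^ 2 := by ring
    _ ≤ _ := mul_le_mul_of_nonneg_left hcs (sq_nonneg _)

lemma aux_sqint (p q m h : ℝ) (hh : 0 < h) :
    2 * h ^ 3 / 3 * q ^ 2 ≤ ∫ x in (m - h)..(m + h), (p + q * x) ^ 2 := by
  have h1 : ∫ x in (m - h)..(m + h), (p + q * x) ^ 2 =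
      (p ^ 2 * (m + h) + p * q * (m + h) ^ 2 + q ^ 2 / 3 * (m + h) ^ 3)
      - (p ^ 2 * (m - h) + p * q * (m - h) ^ 2 + q ^ 2 / 3 * (m - h) ^ 3) := by
    refine intervalIntegral.integral_eq_sub_of_hasDerivAt
      (f := fun x => p ^ 2 * x + p * q * x ^ 2 + q ^ 2 / 3 * x ^ 3) (fun x _ => ?_)
      (Continuous.intervalIntegrable (by fun_prop) _ _)
    have := (((hasDerivAt_id x).const_mul (p ^ 2)).add (((hasDerivAt_id x).pow 2).const_mul (p * q))).add
      (((hasDerivAt_id x).pow 3).const_mul (q ^ 2 / 3))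
    refine HasDerivAt.congr_deriv this ?_
    simp only [id]
    push_cast
    ring
  rw [h1]
  nlinarith [mul_nonneg hh.le (sq_nonneg (p + q * m))]

lemma aux_cubic (p q r s x : ℝ) :
    HasDerivAt (fun t : ℝ => p + q * t + r * t ^ 2 + s * t ^ 3)
      (q + 2 * r * x + 3 * s * x ^ 2) x := by
  have := ((((hasDerivAt_id x).const_mul q).const_add p).add
    (((hasDerivAt_id x).pow 2).const_mul r)).add (((hasDerivAt_id x).pow 3).const_mul s)
  refine HasDerivAt.congr_deriv this ?_
  simp only [id]
  push_cast
  ring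

lemma aux_deriv {f : ℝ → ℝ} (p q r s x : ℝ)
    (h : ∀ t, f t = p + q * t + r * t ^ 2 + s * t ^ 3) :
    deriv f x = q + 2 * r * x + 3 * s * x ^ 2 := by
  rw [funext h]
  exact (aux_cubic p q r s x).deriv

lemma aux_v {v : ℝ → ℝ → ℝ} (hv : MorleyShape2 v) :
    ∃ p q α β k : ℝ, (∀ x y, pdx (pdx v) x y = p + α * x) ∧ (∀ x y, pdy (pdy v) x y = q + β * y) ∧
      (∀ x y, pdx (pdy v) x y = k) ∧ (∀ x y, pdy (pdx v) x y = k) ∧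
      (∀ x y, pdx (pdx (pdx v)) x y = α) ∧ (∀ x y, pdy (pdy (pdy v)) x y = β) := by
  obtain ⟨c0, c1, c2, c3, c4, c5, c6, c7, hv⟩ := hv
  have hx : ∀ x y, pdx v x y = c1 + c4 * y + 2 * c3 * x + 3 * c6 * x ^ 2 := fun x y => by
    rw [pdx, aux_deriv (c0 + c2 * y + c5 * y ^ 2 + c7 * y ^ 3) (c1 + c4 * y) c3 c6 x
      (fun t => by rw [hv]; ring)]
  have hy : ∀ x y, pdy v x y = c2 + c4 * x + 2 * c5 * y + 3 * c7 * y ^ 2 := fun x y => by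
    rw [pdy, aux_deriv (c0 + c1 * x + c3 * x ^ 2 + c6 * x ^ 3) (c2 + c4 * x) c5 c7 y
      (fun t => by rw [hv]; ring)]
  have hxx : ∀ x y, pdx (pdx v) x y = 2 * c3 + 6 * c6 * x := fun x y => by
    rw [pdx, aux_deriv (c1 + c4 * y) (2 * c3) (3 * c6) 0 x (fun t => by rw [hx]; ring)]; ring
  have hyy : ∀ x y, pdy (pdy v) x y = 2 * c5 + 6 * c7 * y := fun x y => by
    rw [pdy, aux_deriv (c2 + c4 * x) (2 * c5) (3 * c7) 0 y (fun t => by rw [hy]; ring)]; ring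
  refine ⟨2 * c3, 2 * c5, 6 * c6, 6 * c7, c4, hxx, hyy, ?_, ?_, ?_, ?_⟩
  · intro x y
    rw [pdx, aux_deriv (c2 + 2 * c5 * y + 3 * c7 * y ^ 2) c4 0 0 x (fun t => by rw [hy]; ring)]; ring
  · intro x y
    rw [pdy, aux_deriv (c1 + 2 * c3 * x + 3 * c6 * x ^ 2) c4 0 0 y (fun t => by rw [hx]; ring)]; ring
  · intro x y
    rw [pdx, aux_deriv (2 * c3) (6 * c6) 0 0 x (fun t => by rw [hxx]; ring)]; ring
  · intro x y
    rw [pdy, aux_deriv (2 * c5) (6 * c7) 0 0 y (fun t => by rw [hyy]; ring)]; ring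

/-- Scaled superconvergence estimate combining the interpolation expansion terms with
the correction coefficients `a` and `b` on one element. -/
theorem stmt_11 :
    ∃ C > (0:ℝ), ∀ h : ℝ, 0 < h → ∀ x1c x2c : ℝ, ∀ u v : ℝ → ℝ → ℝ,
      C4Near u (x1c - h) (x1c + h) (x2c - h) (x2c + h) → MorleyShape2 v →
      |(h ^ 2 / 3) * (∫ x in (x1c - h)..(x1c + h), ∫ y in (x2c - h)..(x2c + h),
            pdx (pdy (pdy u)) x y * pdx (pdx (pdx v)) x y)
          + (h ^ 2 / 3) * (∫ x in (x1c - h)..(x1c + h), ∫ y in (x2c - h)..(x2c + h),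
            pdx (pdx (pdy u)) x y * pdy (pdy (pdy v)) x y)
          + (-(h / 6) * (∫ t in (x2c - h)..(x2c + h), pdx (pdy (pdy u)) (x1c + h) t))
            * (∫ x in (x1c - h)..(x1c + h), ∫ y in (x2c - h)..(x2c + h), pdx (pdx (pdx v)) x y)
          + (-(h / 6) * (∫ t in (x1c - h)..(x1c + h), pdx (pdx (pdy u)) t (x2c - h)))
            * (∫ x in (x1c - h)..(x1c + h), ∫ y in (x2c - h)..(x2c + h), pdy (pdy (pdy v)) x y)|
        ≤ C * h ^ 2 * semiH4R u (x1c - h) (x1c + h) (x2c - h) (x2c + h) * semiH2R v (x1c - h) (x1c + h) (x2c - h) (x2c + h) := by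
  refine ⟨8 / 3, by norm_num, ?_⟩
  rintro h hh x1c x2c u v ⟨U, hU, hK, hu⟩ hv
  obtain ⟨p, q, α, β, k, hxx, hyy, hxy, hyx, hxxx, hyyy⟩ := aux_v hv
  have hab : x1c - h < x1c + h := by linarith
  have hcd : x2c - h < x2c + h := by linarith
  have e2h : ∀ m : ℝ, m + h - (m - h) = 2 * h := fun m => by ring
  -- bounds for the shape function
  set M := semiH2R v (x1c - h) (x1c + h) (x2c - h) (x2c + h) with hM
  have hM0 : 0 ≤ M := Real.sqrt_nonneg _
  set Q : ℝ → ℝ → ℝ := fun x y => (p + α * x) ^ 2 + k ^ 2 + k ^ 2 + (q + β * y) ^ 2 with hQ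
  have hQc : Continuous (uncurry Q) := by
    simp only [hQ, uncurry_def]; fun_prop
  have hMQ : M = Real.sqrt
      (∫ x in (x1c - h)..(x1c + h), ∫ y in (x2c - h)..(x2c + h), Q x y) := by
    simp only [hM, semiH2R, hxx, hyy, hxy, hyx, hQ]
  have hQ0 : 0 ≤ ∫ x in (x1c - h)..(x1c + h), ∫ y in (x2c - h)..(x2c + h), Q x y :=
    intervalIntegral.integral_nonneg hab.le fun x _ =>
      intervalIntegral.integral_nonneg hcd.le fun y _ => by positivity
  have hM2 : M ^ 2 = ∫ x in (x1c - h)..(x1c + h), ∫ y in (x2c - h)..(x2c + h), Q x y := by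
    rw [hMQ, Real.sq_sqrt hQ0]
  have hα : h ^ 2 * |α| ≤ M := by
    have h1 := aux_mono hab.le hcd.le (f := fun x _ => (p + α * x) ^ 2) (g := Q)
      (by simp only [uncurry_def]; fun_prop) hQc (fun x _ y _ => by
        simp only [hQ]; nlinarith [sq_nonneg k, sq_nonneg (q + β * y)])
    rw [← hM2] at h1
    simp only [intervalIntegral.integral_const, e2h, smul_eq_mul,
      intervalIntegral.integral_const_mul] at h1
    have h2 := mul_le_mul_of_nonneg_left (aux_sqint p α x1c h hh) (by positivity : 0 ≤ 2 * h)
    refine le_of_abs_le (abs_le_of_sq_le_sq ?_ hM0)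
    rw [mul_pow, sq_abs]
    nlinarith [sq_nonneg (h ^ 2 * α)]
  have hβ : h ^ 2 * |β| ≤ M := by
    have h1 := aux_mono hab.le hcd.le (f := fun _ y => (q + β * y) ^ 2) (g := Q)
      (by simp only [uncurry_def]; fun_prop) hQc (fun x _ y _ => by
        simp only [hQ]; nlinarith [sq_nonneg k, sq_nonneg (p + α * x)])
    rw [← hM2] at h1
    simp only [intervalIntegral.integral_const, e2h, smul_eq_mul] at h1
    have h2 := mul_le_mul_of_nonneg_left (aux_sqint q β x2c h hh) (by positivity : 0 ≤ 2 * h)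
    refine le_of_abs_le (abs_le_of_sq_le_sq ?_ hM0)
    rw [mul_pow, sq_abs]
    nlinarith [sq_nonneg (h ^ 2 * β)]
  -- regularity of the derivatives of `u`
  have uy := aux_pdy (m := 3) hU (by norm_num) hu
  have ux := aux_pdx (m := 3) hU (by norm_num) hu
  have uyy := aux_pdy (m := 2) hU (by norm_num) uy
  have uxy := aux_pdx (m := 2) hU (by norm_num) uy
  have uxx := aux_pdx (m := 2) hU (by norm_num) ux
  have uyyy := aux_pdy (m := 1) hU (by norm_num) uyy
  have uxyy := aux_pdx (m := 1) hU (by norm_num) uyy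
  have uxxy := aux_pdx (m := 1) hU (by norm_num) uxy
  have uxxx := aux_pdx (m := 1) hU (by norm_num) uxx
  have d1 := (aux_pdx (m := 0) hU (by norm_num) uxxx).continuousOn.mono hK
  have d2 := (aux_pdx (m := 0) hU (by norm_num) uxxy).continuousOn.mono hK
  have d3 := (aux_pdx (m := 0) hU (by norm_num) uxyy).continuousOn.mono hK
  have d4 := (aux_pdx (m := 0) hU (by norm_num) uyyy).continuousOn.mono hK
  have d5 := (aux_pdy (m := 0) hU (by norm_num) uyyy).continuousOn.mono hK
  have c1 := uxyy.continuousOn.mono hK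
  have c2 := uxxy.continuousOn.mono hK
  set N := semiH4R u (x1c - h) (x1c + h) (x2c - h) (x2c + h) with hN
  have hN0 : 0 ≤ N := Real.sqrt_nonneg _
  set g := pdx (pdx (pdy (pdy u))) with hg
  set S := ∫ x in (x1c - h)..(x1c + h), ∫ y in (x2c - h)..(x2c + h), g x y ^ 2 with hS
  have hSN : S ≤ N ^ 2 := by
    have h1 : S ≤ _ := aux_monoOn hab.le hcd.le (f := fun x y => g x y ^ 2)
      (g := fun x y => (pdx (pdx (pdx (pdx u))) x y) ^ 2 + 4 * (pdx (pdx (pdx (pdy u))) x y) ^ 2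
      + 6 * (pdx (pdx (pdy (pdy u))) x y) ^ 2 + 4 * (pdx (pdy (pdy (pdy u))) x y) ^ 2
      + (pdy (pdy (pdy (pdy u))) x y) ^ 2) (d3.pow 2)
      (((((d1.pow 2).add (continuousOn_const.mul (d2.pow 2))).add
        (continuousOn_const.mul (d3.pow 2))).add (continuousOn_const.mul (d4.pow 2))).add
        (d5.pow 2)) (fun x _ y _ => by
          simp only [hg]
          nlinarith [sq_nonneg (pdx (pdx (pdx (pdx u))) x y),
            sq_nonneg (pdx (pdx (pdx (pdy u))) x y), sq_nonneg (pdx (pdx (pdy (pdy u))) x y),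
            sq_nonneg (pdx (pdy (pdy (pdy u))) x y), sq_nonneg (pdy (pdy (pdy (pdy u))) x y)])
    have hS0 : 0 ≤ S := intervalIntegral.integral_nonneg hab.le fun x _ =>
      intervalIntegral.integral_nonneg hcd.le fun y _ => by positivity
    rw [hN, semiH4R, Real.sq_sqrt (hS0.trans h1)]
    exact h1
  -- the second third-order term
  have hsym : ∀ x y, (x, y) ∈ U → pdy (pdx (pdx (pdy u))) x y = g x y := by
    intro x y hp
    rw [aux_symm hU (by norm_num) uxy hp, hg]
    refine Filter.EventuallyEq.deriv_eq ?_
    have : ∀ᶠ t in nhds x, (t, y) ∈ U :=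
      (Continuous.prodMk_left y).continuousAt.preimage_mem_nhds (hU.mem_nhds hp)
    filter_upwards [this] with t ht
    exact aux_symm hU (by norm_num) uy ht
  have k2 := aux_core hab hcd (e := x2c - h) ⟨le_rfl, hcd.le⟩ c2 d3 (fun x hx y hy => by
    have hp : (x, y) ∈ U := hK ⟨hx, hy⟩
    have := aux_hy hU (by norm_num) uxxy hp
    rwa [hsym x y hp] at this)
  have hsw : MapsTo Prod.swap (Icc (x2c - h) (x2c + h) ×ˢ Icc (x1c - h) (x1c + h))
      (Icc (x1c - h) (x1c + h) ×ˢ Icc (x2c - h) (x2c + h)) := fun p hp => ⟨hp.2, hp.1⟩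
  have k1 := aux_core hcd hab (e := x1c + h) ⟨hab.le, le_rfl⟩
    (w := fun y x => pdx (pdy (pdy u)) x y) (g := fun y x => g x y)
    (c1.comp continuous_swap.continuousOn hsw) (d3.comp continuous_swap.continuousOn hsw)
    (fun y hy x hx => aux_hx hU (by norm_num) uxyy (hK ⟨hx, hy⟩))
  rw [← aux_swap hab.le hcd.le c1,
    ← aux_swap (f := fun x y => g x y ^ 2) hab.le hcd.le (d3.pow 2)] at k1
  rw [← hS, e2h, e2h] at k1 k2
  simp only [hxxx, hyyy, intervalIntegral.integral_mul_const, intervalIntegral.integral_const,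
    e2h, smul_eq_mul]
  set I1 := ∫ x in (x1c - h)..(x1c + h), ∫ y in (x2c - h)..(x2c + h), pdx (pdy (pdy u)) x y
  set I2 := ∫ x in (x1c - h)..(x1c + h), ∫ y in (x2c - h)..(x2c + h), pdx (pdx (pdy u)) x y
  set J1 := ∫ t in (x2c - h)..(x2c + h), pdx (pdy (pdy u)) (x1c + h) t
  set J2 := ∫ t in (x1c - h)..(x1c + h), pdx (pdx (pdy u)) t (x2c - h)
  have hh4 : 0 ≤ 16 * h ^ 4 := by positivity
  have b1 : |I1 - 2 * h * J1| ≤ 4 * h ^ 2 * N := by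
    refine abs_le_of_sq_le_sq ?_ (by positivity)
    nlinarith [mul_le_mul_of_nonneg_left hSN hh4]
  have b2 : |I2 - 2 * h * J2| ≤ 4 * h ^ 2 * N := by
    refine abs_le_of_sq_le_sq ?_ (by positivity)
    nlinarith [mul_le_mul_of_nonneg_left hSN hh4]
  have t1 : |α| * |I1 - 2 * h * J1| ≤ 4 * N * M := by
    calc _ ≤ |α| * (4 * h ^ 2 * N) := mul_le_mul_of_nonneg_left b1 (abs_nonneg _)
      _ = 4 * N * (h ^ 2 * |α|) := by ring
      _ ≤ _ := mul_le_mul_of_nonneg_left hα (by positivity)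
  have t2 : |β| * |I2 - 2 * h * J2| ≤ 4 * N * M := by
    calc _ ≤ |β| * (4 * h ^ 2 * N) := mul_le_mul_of_nonneg_left b2 (abs_nonneg _)
      _ = 4 * N * (h ^ 2 * |β|) := by ring
      _ ≤ _ := mul_le_mul_of_nonneg_left hβ (by positivity)
  have hh2 : 0 ≤ h ^ 2 / 3 := by positivity
  calc _ = |h ^ 2 / 3 * (α * (I1 - 2 * h * J1) + β * (I2 - 2 * h * J2))| := by
        congr 1; ring
    _ = h ^ 2 / 3 * |α * (I1 - 2 * h * J1) + β * (I2 - 2 * h * J2)| := by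
        rw [abs_mul, abs_of_nonneg hh2]
    _ ≤ h ^ 2 / 3 * (|α| * |I1 - 2 * h * J1| + |β| * |I2 - 2 * h * J2|) := by
        refine mul_le_mul_of_nonneg_left ?_ hh2
        rw [← abs_mul, ← abs_mul]
        exact abs_add_le _ _
    _ ≤ h ^ 2 / 3 * (4 * N * M + 4 * N * M) :=
        mul_le_mul_of_nonneg_left (add_le_add t1 t2) hh2
    _ = _ := by ring
end

section
/- For every ŵ in the reference shape space P̂ = P₂(K̂) + span{ξ₁³, ξ₂³, ξ₃³, ξ₁ξ₂ξ₃} of the three-dimensional cubic Morley element and for each i ∈ {1, 2, 3}, the orthogonality relation ∫_{K̂} ∂(ŵ − Îŵ)/∂ξᵢ dξ₁dξ₂dξ₃ = 0 holds. -/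
open MeasureTheory

/-- Partial derivative in the first variable of a curried function on `ℝ³`. -/
noncomputable def qd1 (f : ℝ → ℝ → ℝ → ℝ) : ℝ → ℝ → ℝ → ℝ :=
  fun x y z => deriv (fun t => f t y z) x

/-- Partial derivative in the second variable of a curried function on `ℝ³`. -/
noncomputable def qd2 (f : ℝ → ℝ → ℝ → ℝ) : ℝ → ℝ → ℝ → ℝ :=
  fun x y z => deriv (fun t => f x t z) y

/-- Partial derivative in the third variable of a curried function on `ℝ³`. -/
noncomputable def qd3 (f : ℝ → ℝ → ℝ → ℝ) : ℝ → ℝ → ℝ → ℝ :=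
  fun x y z => deriv (fun t => f x y t) z

/-- Membership in the shape space `P(K) = P₂(K) + span{x₁³, x₂³, x₃³, x₁x₂x₃}` of the
three-dimensional cubic Morley element. -/
def MorleyShape3 (w : ℝ → ℝ → ℝ → ℝ) : Prop :=
  ∃ c0 c1 c2 c3 c4 c5 c6 c7 c8 c9 c10 c11 c12 c13 : ℝ, ∀ x y z : ℝ,
    w x y z = c0 + c1 * x + c2 * y + c3 * z + c4 * x ^ 2 + c5 * y ^ 2 + c6 * z ^ 2
      + c7 * (x * y) + c8 * (x * z) + c9 * (y * z)
      + c10 * x ^ 3 + c11 * y ^ 3 + c12 * z ^ 3 + c13 * (x * y * z)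

/-- The trilinear (Q₁) interpolation operator on the reference cube `[-1,1]³`. -/
noncomputable def Ihat3 (w : ℝ → ℝ → ℝ → ℝ) : ℝ → ℝ → ℝ → ℝ := fun x y z =>
  (w 1 1 1 * ((1 + x) * (1 + y) * (1 + z))
    + w 1 1 (-1) * ((1 + x) * (1 + y) * (1 - z))
    + w 1 (-1) 1 * ((1 + x) * (1 - y) * (1 + z))
    + w 1 (-1) (-1) * ((1 + x) * (1 - y) * (1 - z))
    + w (-1) 1 1 * ((1 - x) * (1 + y) * (1 + z))
    + w (-1) 1 (-1) * ((1 - x) * (1 + y) * (1 - z))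
    + w (-1) (-1) 1 * ((1 - x) * (1 - y) * (1 + z))
    + w (-1) (-1) (-1) * ((1 - x) * (1 - y) * (1 - z))) / 8

theorem aux_deriv_s13 (a b k x : ℝ) :
    deriv (fun t : ℝ => a * (t ^ 2 - 1) + b * (t ^ 3 - t) + k) x
      = 2 * a * x + b * (3 * x ^ 2 - 1) := by
  have h2 : HasDerivAt (fun t : ℝ => t ^ 2) (2 * x) x := by
    simpa using hasDerivAt_pow 2 x
  have h3 : HasDerivAt (fun t : ℝ => t ^ 3) (3 * x ^ 2) x := by
    simpa using hasDerivAt_pow 3 x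
  have h := (((h2.sub_const 1).const_mul a).add
    ((h3.sub (hasDerivAt_id x)).const_mul b)).add_const k
  have h' : HasDerivAt (fun t : ℝ => a * (t ^ 2 - 1) + b * (t ^ 3 - t) + k)
      (a * (2 * x) + b * (3 * x ^ 2 - 1)) x := h
  rw [h'.deriv]
  ring

theorem aux_int (a b : ℝ) :
    (∫ x in (-1:ℝ)..1, (2 * a * x + b * (3 * x ^ 2 - 1))) = 0 := by
  have h : ∀ x ∈ Set.uIcc (-1:ℝ) 1,
      HasDerivAt (fun t : ℝ => a * t ^ 2 + b * (t ^ 3 - t))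
        (2 * a * x + b * (3 * x ^ 2 - 1)) x := by
    intro x _
    have h2 : HasDerivAt (fun t : ℝ => t ^ 2) (2 * x) x := by
      simpa using hasDerivAt_pow 2 x
    have h3 : HasDerivAt (fun t : ℝ => t ^ 3) (3 * x ^ 2) x := by
      simpa using hasDerivAt_pow 3 x
    have h := (h2.const_mul a).add ((h3.sub (hasDerivAt_id x)).const_mul b)
    have e : 2 * a * x + b * (3 * x ^ 2 - 1) = a * (2 * x) + b * (3 * x ^ 2 - 1) := by ring
    rw [e]
    exact h
  rw [intervalIntegral.integral_eq_sub_of_hasDerivAt h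
    (Continuous.intervalIntegrable (by fun_prop) _ _)]
  norm_num

/-- Orthogonality of the gradient of the trilinear interpolation error on the reference
cube, for functions in the reference cubic Morley shape space. -/
theorem stmt_13 (w : ℝ → ℝ → ℝ → ℝ) (hw : MorleyShape3 w) :
    (∫ x in (-1:ℝ)..1, ∫ y in (-1:ℝ)..1, ∫ z in (-1:ℝ)..1,
        qd1 (fun a b c => w a b c - Ihat3 w a b c) x y z) = 0 ∧
    (∫ x in (-1:ℝ)..1, ∫ y in (-1:ℝ)..1, ∫ z in (-1:ℝ)..1,
        qd2 (fun a b c => w a b c - Ihat3 w a b c) x y z) = 0 ∧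
    (∫ x in (-1:ℝ)..1, ∫ y in (-1:ℝ)..1, ∫ z in (-1:ℝ)..1,
        qd3 (fun a b c => w a b c - Ihat3 w a b c) x y z) = 0 := by
  obtain ⟨c0, c1, c2, c3, c4, c5, c6, c7, c8, c9, c10, c11, c12, c13, h⟩ := hw
  have key : ∀ x y z : ℝ, w x y z - Ihat3 w x y z
      = c4 * (x ^ 2 - 1) + c10 * (x ^ 3 - x) + (c5 * (y ^ 2 - 1) + c11 * (y ^ 3 - y)
        + (c6 * (z ^ 2 - 1) + c12 * (z ^ 3 - z))) := by
    intro x y z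
    simp only [Ihat3, h]
    ring
  have d1 : ∀ x y z : ℝ, qd1 (fun a b c => w a b c - Ihat3 w a b c) x y z
      = 2 * c4 * x + c10 * (3 * x ^ 2 - 1) := by
    intro x y z
    simp only [qd1, key]
    exact aux_deriv_s13 _ _ _ _
  have d2 : ∀ x y z : ℝ, qd2 (fun a b c => w a b c - Ihat3 w a b c) x y z
      = 2 * c5 * y + c11 * (3 * y ^ 2 - 1) := by
    intro x y z
    rw [← aux_deriv_s13 c5 c11 (c4 * (x ^ 2 - 1) + c10 * (x ^ 3 - x)
        + (c6 * (z ^ 2 - 1) + c12 * (z ^ 3 - z))) y]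
    simp only [qd2, key]
    congr 1
    funext t
    ring
  have d3 : ∀ x y z : ℝ, qd3 (fun a b c => w a b c - Ihat3 w a b c) x y z
      = 2 * c6 * z + c12 * (3 * z ^ 2 - 1) := by
    intro x y z
    rw [← aux_deriv_s13 c6 c12 (c4 * (x ^ 2 - 1) + c10 * (x ^ 3 - x)
        + (c5 * (y ^ 2 - 1) + c11 * (y ^ 3 - y))) z]
    simp only [qd3, key]
    congr 1
    funext t
    ring
  refine ⟨?_, ?_, ?_⟩
  · simp only [d1, intervalIntegral.integral_const, smul_eq_mul,
      intervalIntegral.integral_const_mul, aux_int, mul_zero]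
  · simp only [d2, intervalIntegral.integral_const, smul_eq_mul,
      intervalIntegral.integral_const_mul, aux_int, mul_zero]
  · simp only [d3, aux_int, intervalIntegral.integral_zero]
end

section
/- There exists a constant C > 0, independent of h, the center of K, u and w, such that for every h > 0, every cube K of half side h, every function u of class C⁴ on a neighborhood of K, and every w in the shape space P(K) = P₂(K) + span{x₁³, x₂³, x₃³, x₁x₂x₃}, one has |∫_K ∇(Δu) · ∇(w − I_K w) dx₁dx₂dx₃| ≤ C h² |u|_{H⁴(K)} |w|_{H²(K)}. -/
open MeasureTheory

/-- The trilinear (Q₁) interpolation operator on the cube with center `(c1, c2, c3)` and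
half side `h`: the unique element of
`span{1, x₁, x₂, x₃, x₁x₂, x₁x₃, x₂x₃, x₁x₂x₃}` agreeing with `w` at the eight vertices. -/
noncomputable def IK3 (w : ℝ → ℝ → ℝ → ℝ) (c1 c2 c3 h : ℝ) : ℝ → ℝ → ℝ → ℝ :=
  fun x y z =>
    (w (c1 + h) (c2 + h) (c3 + h)
        * ((1 + (x - c1) / h) * (1 + (y - c2) / h) * (1 + (z - c3) / h))
      + w (c1 + h) (c2 + h) (c3 - h)
        * ((1 + (x - c1) / h) * (1 + (y - c2) / h) * (1 - (z - c3) / h))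
      + w (c1 + h) (c2 - h) (c3 + h)
        * ((1 + (x - c1) / h) * (1 - (y - c2) / h) * (1 + (z - c3) / h))
      + w (c1 + h) (c2 - h) (c3 - h)
        * ((1 + (x - c1) / h) * (1 - (y - c2) / h) * (1 - (z - c3) / h))
      + w (c1 - h) (c2 + h) (c3 + h)
        * ((1 - (x - c1) / h) * (1 + (y - c2) / h) * (1 + (z - c3) / h))
      + w (c1 - h) (c2 + h) (c3 - h)
        * ((1 - (x - c1) / h) * (1 + (y - c2) / h) * (1 - (z - c3) / h))
      + w (c1 - h) (c2 - h) (c3 + h)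
        * ((1 - (x - c1) / h) * (1 - (y - c2) / h) * (1 + (z - c3) / h))
      + w (c1 - h) (c2 - h) (c3 - h)
        * ((1 - (x - c1) / h) * (1 - (y - c2) / h) * (1 - (z - c3) / h))) / 8

/-- The `H²` seminorm of `v` on the box `[a1,b1] × [a2,b2] × [a3,b3]`, each ordering of
mixed partial derivatives counted. -/
noncomputable def semiH2Box (v : ℝ → ℝ → ℝ → ℝ) (a1 b1 a2 b2 a3 b3 : ℝ) : ℝ :=
  Real.sqrt (∫ x in a1..b1, ∫ y in a2..b2, ∫ z in a3..b3,
    (qd1 (qd1 v) x y z) ^ 2 + (qd2 (qd2 v) x y z) ^ 2 + (qd3 (qd3 v) x y z) ^ 2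
      + 2 * (qd1 (qd2 v) x y z) ^ 2 + 2 * (qd1 (qd3 v) x y z) ^ 2
      + 2 * (qd2 (qd3 v) x y z) ^ 2)

/-- The `H⁴` seminorm of `u` on the box `[a1,b1] × [a2,b2] × [a3,b3]`, each ordering of
mixed partial derivatives counted (hence the multinomial coefficients). -/
noncomputable def semiH4Box (u : ℝ → ℝ → ℝ → ℝ) (a1 b1 a2 b2 a3 b3 : ℝ) : ℝ :=
  Real.sqrt (∫ x in a1..b1, ∫ y in a2..b2, ∫ z in a3..b3,
    (qd1 (qd1 (qd1 (qd1 u))) x y z) ^ 2 + (qd2 (qd2 (qd2 (qd2 u))) x y z) ^ 2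
      + (qd3 (qd3 (qd3 (qd3 u))) x y z) ^ 2
      + 4 * (qd1 (qd1 (qd1 (qd2 u))) x y z) ^ 2
      + 4 * (qd1 (qd1 (qd1 (qd3 u))) x y z) ^ 2
      + 4 * (qd1 (qd2 (qd2 (qd2 u))) x y z) ^ 2
      + 4 * (qd2 (qd2 (qd2 (qd3 u))) x y z) ^ 2
      + 4 * (qd1 (qd3 (qd3 (qd3 u))) x y z) ^ 2
      + 4 * (qd2 (qd3 (qd3 (qd3 u))) x y z) ^ 2
      + 6 * (qd1 (qd1 (qd2 (qd2 u))) x y z) ^ 2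
      + 6 * (qd1 (qd1 (qd3 (qd3 u))) x y z) ^ 2
      + 6 * (qd2 (qd2 (qd3 (qd3 u))) x y z) ^ 2
      + 12 * (qd1 (qd1 (qd2 (qd3 u))) x y z) ^ 2
      + 12 * (qd1 (qd2 (qd2 (qd3 u))) x y z) ^ 2
      + 12 * (qd1 (qd2 (qd3 (qd3 u))) x y z) ^ 2)

/-- `u` is of class `C⁴` on a neighborhood of the box `[a1,b1] × [a2,b2] × [a3,b3]`. -/
def C4Near3 (u : ℝ → ℝ → ℝ → ℝ) (a1 b1 a2 b2 a3 b3 : ℝ) : Prop :=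
  ∃ U : Set (ℝ × ℝ × ℝ), IsOpen U ∧
    Set.Icc a1 b1 ×ˢ (Set.Icc a2 b2 ×ˢ Set.Icc a3 b3) ⊆ U ∧
    ContDiffOn ℝ 4 (fun p : ℝ × ℝ × ℝ => u p.1 p.2.1 p.2.2) U


/-- Uncurried version of a curried function on `ℝ³`. -/
def unc3 (f : ℝ → ℝ → ℝ → ℝ) : ℝ × ℝ × ℝ → ℝ := fun p => f p.1 p.2.1 p.2.2

lemma qd1_hasDerivAt {f : ℝ → ℝ → ℝ → ℝ} (hf : ContDiff ℝ 1 (unc3 f)) (x y z : ℝ) :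
    HasDerivAt (fun t => f t y z) (fderiv ℝ (unc3 f) (x, y, z) (1, 0, 0)) x := by
  have h1 : HasFDerivAt (unc3 f) (fderiv ℝ (unc3 f) (x, y, z)) (x, y, z) :=
    (hf.differentiable (by norm_num) _).hasFDerivAt
  have h2 : HasDerivAt (fun t : ℝ => (t, y, z)) (1, 0, 0) x :=
    (hasDerivAt_id x).prodMk ((hasDerivAt_const x y).prodMk (hasDerivAt_const x z))
  exact h1.comp_hasDerivAt x h2

lemma qd2_hasDerivAt {f : ℝ → ℝ → ℝ → ℝ} (hf : ContDiff ℝ 1 (unc3 f)) (x y z : ℝ) :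
    HasDerivAt (fun t => f x t z) (fderiv ℝ (unc3 f) (x, y, z) (0, 1, 0)) y := by
  have h1 : HasFDerivAt (unc3 f) (fderiv ℝ (unc3 f) (x, y, z)) (x, y, z) :=
    (hf.differentiable (by norm_num) _).hasFDerivAt
  have h2 : HasDerivAt (fun t : ℝ => (x, t, z)) (0, 1, 0) y :=
    (hasDerivAt_const y x).prodMk ((hasDerivAt_id y).prodMk (hasDerivAt_const y z))
  exact h1.comp_hasDerivAt y h2

lemma qd3_hasDerivAt {f : ℝ → ℝ → ℝ → ℝ} (hf : ContDiff ℝ 1 (unc3 f)) (x y z : ℝ) :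
    HasDerivAt (fun t => f x y t) (fderiv ℝ (unc3 f) (x, y, z) (0, 0, 1)) z := by
  have h1 : HasFDerivAt (unc3 f) (fderiv ℝ (unc3 f) (x, y, z)) (x, y, z) :=
    (hf.differentiable (by norm_num) _).hasFDerivAt
  have h2 : HasDerivAt (fun t : ℝ => (x, y, t)) (0, 0, 1) z :=
    (hasDerivAt_const z x).prodMk ((hasDerivAt_const z y).prodMk (hasDerivAt_id z))
  exact h1.comp_hasDerivAt z h2

lemma unc3_qd1 {f : ℝ → ℝ → ℝ → ℝ} (hf : ContDiff ℝ 1 (unc3 f)) :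
    unc3 (qd1 f) = fun p => fderiv ℝ (unc3 f) p (1, 0, 0) := by
  funext p
  exact (qd1_hasDerivAt hf p.1 p.2.1 p.2.2).deriv

lemma unc3_qd2 {f : ℝ → ℝ → ℝ → ℝ} (hf : ContDiff ℝ 1 (unc3 f)) :
    unc3 (qd2 f) = fun p => fderiv ℝ (unc3 f) p (0, 1, 0) := by
  funext p
  exact (qd2_hasDerivAt hf p.1 p.2.1 p.2.2).deriv

lemma unc3_qd3 {f : ℝ → ℝ → ℝ → ℝ} (hf : ContDiff ℝ 1 (unc3 f)) :
    unc3 (qd3 f) = fun p => fderiv ℝ (unc3 f) p (0, 0, 1) := by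
  funext p
  exact (qd3_hasDerivAt hf p.1 p.2.1 p.2.2).deriv

lemma qd1_smooth {f : ℝ → ℝ → ℝ → ℝ} (n : ℕ) (hf : ContDiff ℝ ((n + 1 : ℕ) : ℕ∞) (unc3 f)) :
    ContDiff ℝ (n : ℕ∞) (unc3 (qd1 f)) := by
  rw [unc3_qd1 (hf.of_le (by norm_cast; omega))]
  exact (hf.fderiv_right (by norm_cast)).clm_apply contDiff_const

lemma qd2_smooth {f : ℝ → ℝ → ℝ → ℝ} (n : ℕ) (hf : ContDiff ℝ ((n + 1 : ℕ) : ℕ∞) (unc3 f)) :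
    ContDiff ℝ (n : ℕ∞) (unc3 (qd2 f)) := by
  rw [unc3_qd2 (hf.of_le (by norm_cast; omega))]
  exact (hf.fderiv_right (by norm_cast)).clm_apply contDiff_const

lemma qd3_smooth {f : ℝ → ℝ → ℝ → ℝ} (n : ℕ) (hf : ContDiff ℝ ((n + 1 : ℕ) : ℕ∞) (unc3 f)) :
    ContDiff ℝ (n : ℕ∞) (unc3 (qd3 f)) := by
  rw [unc3_qd3 (hf.of_le (by norm_cast; omega))]
  exact (hf.fderiv_right (by norm_cast)).clm_apply contDiff_const

lemma snd_apply {F : ℝ × ℝ × ℝ → ℝ} (hF : ContDiff ℝ 2 F) (p v w : ℝ × ℝ × ℝ) :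
    fderiv ℝ (fun q => fderiv ℝ F q v) p w = fderiv ℝ (fderiv ℝ F) p w v := by
  have h : DifferentiableAt ℝ (fderiv ℝ F) p :=
    ((hF.fderiv_right (m := 1) (by norm_num)).differentiable (by norm_num)) p
  rw [fderiv_clm_apply h (differentiableAt_const v)]
  simp

lemma snd_symm {F : ℝ × ℝ × ℝ → ℝ} (hF : ContDiff ℝ 2 F) (p v w : ℝ × ℝ × ℝ) :
    fderiv ℝ (fun q => fderiv ℝ F q v) p w = fderiv ℝ (fun q => fderiv ℝ F q w) p v := by
  rw [snd_apply hF, snd_apply hF]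
  exact (hF.contDiffAt.isSymmSndFDerivAt (by simp)) w v

lemma qd21 {f : ℝ → ℝ → ℝ → ℝ} (hf : ContDiff ℝ 2 (unc3 f)) : qd2 (qd1 f) = qd1 (qd2 f) := by
  have h1 : ContDiff ℝ 1 (unc3 f) := hf.of_le (by norm_num)
  have e : unc3 (qd2 (qd1 f)) = unc3 (qd1 (qd2 f)) := by
    rw [unc3_qd2 (qd1_smooth 1 hf), unc3_qd1 (qd2_smooth 1 hf), unc3_qd1 h1, unc3_qd2 h1]
    funext p
    exact snd_symm hf _ _ _
  funext x y z
  exact congrFun e (x, y, z)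

lemma qd31 {f : ℝ → ℝ → ℝ → ℝ} (hf : ContDiff ℝ 2 (unc3 f)) : qd3 (qd1 f) = qd1 (qd3 f) := by
  have h1 : ContDiff ℝ 1 (unc3 f) := hf.of_le (by norm_num)
  have e : unc3 (qd3 (qd1 f)) = unc3 (qd1 (qd3 f)) := by
    rw [unc3_qd3 (qd1_smooth 1 hf), unc3_qd1 (qd3_smooth 1 hf), unc3_qd1 h1, unc3_qd3 h1]
    funext p
    exact snd_symm hf _ _ _
  funext x y z
  exact congrFun e (x, y, z)

lemma qd32 {f : ℝ → ℝ → ℝ → ℝ} (hf : ContDiff ℝ 2 (unc3 f)) : qd3 (qd2 f) = qd2 (qd3 f) := by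
  have h1 : ContDiff ℝ 1 (unc3 f) := hf.of_le (by norm_num)
  have e : unc3 (qd3 (qd2 f)) = unc3 (qd2 (qd3 f)) := by
    rw [unc3_qd3 (qd2_smooth 1 hf), unc3_qd2 (qd3_smooth 1 hf), unc3_qd2 h1, unc3_qd3 h1]
    funext p
    exact snd_symm hf _ _ _
  funext x y z
  exact congrFun e (x, y, z)

lemma qd2211 {u : ℝ → ℝ → ℝ → ℝ} (hu : ContDiff ℝ 4 (unc3 u)) :
    qd2 (qd2 (qd1 (qd1 u))) = qd1 (qd1 (qd2 (qd2 u))) := by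
  have u2 : ContDiff ℝ 2 (unc3 u) := hu.of_le (by norm_num)
  have a1 : ContDiff ℝ 3 (unc3 (qd1 u)) := qd1_smooth 3 hu
  have a2 : ContDiff ℝ 3 (unc3 (qd2 u)) := qd2_smooth 3 hu
  have a12 : ContDiff ℝ 2 (unc3 (qd1 (qd2 u))) := qd1_smooth 2 a2
  rw [qd21 (a1.of_le (by norm_num)), qd21 u2, qd21 a12, qd21 (a2.of_le (by norm_num))]

lemma qd3311 {u : ℝ → ℝ → ℝ → ℝ} (hu : ContDiff ℝ 4 (unc3 u)) :
    qd3 (qd3 (qd1 (qd1 u))) = qd1 (qd1 (qd3 (qd3 u))) := by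
  have u2 : ContDiff ℝ 2 (unc3 u) := hu.of_le (by norm_num)
  have a1 : ContDiff ℝ 3 (unc3 (qd1 u)) := qd1_smooth 3 hu
  have a2 : ContDiff ℝ 3 (unc3 (qd3 u)) := qd3_smooth 3 hu
  have a12 : ContDiff ℝ 2 (unc3 (qd1 (qd3 u))) := qd1_smooth 2 a2
  rw [qd31 (a1.of_le (by norm_num)), qd31 u2, qd31 a12, qd31 (a2.of_le (by norm_num))]

lemma qd3322 {u : ℝ → ℝ → ℝ → ℝ} (hu : ContDiff ℝ 4 (unc3 u)) :
    qd3 (qd3 (qd2 (qd2 u))) = qd2 (qd2 (qd3 (qd3 u))) := by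
  have u2 : ContDiff ℝ 2 (unc3 u) := hu.of_le (by norm_num)
  have a1 : ContDiff ℝ 3 (unc3 (qd2 u)) := qd2_smooth 3 hu
  have a2 : ContDiff ℝ 3 (unc3 (qd3 u)) := qd3_smooth 3 hu
  have a12 : ContDiff ℝ 2 (unc3 (qd2 (qd3 u))) := qd2_smooth 2 a2
  rw [qd32 (a1.of_le (by norm_num)), qd32 u2, qd32 a12, qd32 (a2.of_le (by norm_num))]

lemma qd1_add {f g : ℝ → ℝ → ℝ → ℝ} (hf : ContDiff ℝ 1 (unc3 f)) (hg : ContDiff ℝ 1 (unc3 g)) :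
    qd1 (fun a b c => f a b c + g a b c) = fun a b c => qd1 f a b c + qd1 g a b c := by
  funext x y z
  exact deriv_fun_add (qd1_hasDerivAt hf x y z).differentiableAt
    (qd1_hasDerivAt hg x y z).differentiableAt

lemma qd2_add {f g : ℝ → ℝ → ℝ → ℝ} (hf : ContDiff ℝ 1 (unc3 f)) (hg : ContDiff ℝ 1 (unc3 g)) :
    qd2 (fun a b c => f a b c + g a b c) = fun a b c => qd2 f a b c + qd2 g a b c := by
  funext x y z
  exact deriv_fun_add (qd2_hasDerivAt hf x y z).differentiableAt
    (qd2_hasDerivAt hg x y z).differentiableAt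

lemma qd3_add {f g : ℝ → ℝ → ℝ → ℝ} (hf : ContDiff ℝ 1 (unc3 f)) (hg : ContDiff ℝ 1 (unc3 g)) :
    qd3 (fun a b c => f a b c + g a b c) = fun a b c => qd3 f a b c + qd3 g a b c := by
  funext x y z
  exact deriv_fun_add (qd3_hasDerivAt hf x y z).differentiableAt
    (qd3_hasDerivAt hg x y z).differentiableAt

/-- Agreement of two curried functions on a set. -/
def EqOn3 (V : Set (ℝ × ℝ × ℝ)) (f g : ℝ → ℝ → ℝ → ℝ) : Prop :=
  ∀ x y z, (x, y, z) ∈ V → f x y z = g x y z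

lemma EqOn3.d1 {V : Set (ℝ × ℝ × ℝ)} (hV : IsOpen V) {f g : ℝ → ℝ → ℝ → ℝ} (h : EqOn3 V f g) :
    EqOn3 V (qd1 f) (qd1 g) := by
  intro x y z hp
  apply Filter.EventuallyEq.deriv_eq
  have hc : Continuous (fun t : ℝ => (t, y, z)) := by fun_prop
  filter_upwards [(hV.preimage hc).mem_nhds hp] with t ht using h _ _ _ ht

lemma EqOn3.d2 {V : Set (ℝ × ℝ × ℝ)} (hV : IsOpen V) {f g : ℝ → ℝ → ℝ → ℝ} (h : EqOn3 V f g) :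
    EqOn3 V (qd2 f) (qd2 g) := by
  intro x y z hp
  apply Filter.EventuallyEq.deriv_eq
  have hc : Continuous (fun t : ℝ => (x, t, z)) := by fun_prop
  filter_upwards [(hV.preimage hc).mem_nhds hp] with t ht using h _ _ _ ht

lemma EqOn3.d3 {V : Set (ℝ × ℝ × ℝ)} (hV : IsOpen V) {f g : ℝ → ℝ → ℝ → ℝ} (h : EqOn3 V f g) :
    EqOn3 V (qd3 f) (qd3 g) := by
  intro x y z hp
  apply Filter.EventuallyEq.deriv_eq
  have hc : Continuous (fun t : ℝ => (x, y, t)) := by fun_prop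
  filter_upwards [(hV.preimage hc).mem_nhds hp] with t ht using h _ _ _ ht

lemma EqOn3.add {V : Set (ℝ × ℝ × ℝ)} {f g f' g' : ℝ → ℝ → ℝ → ℝ} (h : EqOn3 V f g)
    (h' : EqOn3 V f' g') :
    EqOn3 V (fun a b c => f a b c + f' a b c) (fun a b c => g a b c + g' a b c) := by
  intro x y z hp
  simp only [h x y z hp, h' x y z hp]

/-- Globalization by a cutoff. -/
lemma exists_global {h c1 c2 c3 : ℝ} (hh : 0 < h) {u : ℝ → ℝ → ℝ → ℝ}
    (hu : C4Near3 u (c1 - h) (c1 + h) (c2 - h) (c2 + h) (c3 - h) (c3 + h)) :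
    ∃ (v : ℝ → ℝ → ℝ → ℝ) (V : Set (ℝ × ℝ × ℝ)), ContDiff ℝ 4 (unc3 v) ∧ IsOpen V ∧
      (∀ x ∈ Set.Icc (c1 - h) (c1 + h), ∀ y ∈ Set.Icc (c2 - h) (c2 + h),
        ∀ z ∈ Set.Icc (c3 - h) (c3 + h), (x, y, z) ∈ V) ∧ EqOn3 V u v := by
  obtain ⟨U, hU, hKU, hu⟩ := hu
  rw [← Real.closedBall_eq_Icc, ← Real.closedBall_eq_Icc, ← Real.closedBall_eq_Icc,
    closedBall_prod_same, closedBall_prod_same] at hKU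
  obtain ⟨δ, hδ, hδU⟩ := (isCompact_closedBall _ _).exists_cthickening_subset_open hU hKU
  rw [cthickening_closedBall hδ.le hh.le] at hδU
  let χ : ContDiffBump ((c1, c2, c3) : ℝ × ℝ × ℝ) :=
    ⟨h + δ / 2, δ + h, by positivity, by linarith⟩
  refine ⟨fun x y z => χ (x, y, z) * u x y z, Metric.ball (c1, c2, c3) (h + δ / 2), ?_,
    Metric.isOpen_ball, ?_, ?_⟩
  · rw [contDiff_iff_contDiffAt]
    intro p
    by_cases hp : p ∈ Metric.closedBall (c1, c2, c3) (δ + h)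
    · exact χ.contDiffAt.mul (hu.contDiffAt (hU.mem_nhds (hδU hp)))
    · have : unc3 (fun x y z => χ (x, y, z) * u x y z) =ᶠ[nhds p] fun _ => 0 := by
        filter_upwards [Metric.isClosed_closedBall.isOpen_compl.mem_nhds hp] with q hq
        have : χ q = 0 := χ.zero_of_le_dist (by
          simp only [Set.mem_compl_iff, Metric.mem_closedBall, not_le] at hq
          exact hq.le)
        simp [unc3, this]
      exact contDiffAt_const.congr_of_eventuallyEq this
  · intro x hx y hy z hz
    apply Metric.closedBall_subset_ball (show h < h + δ / 2 by linarith)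
    rw [← closedBall_prod_same, ← closedBall_prod_same, Real.closedBall_eq_Icc,
      Real.closedBall_eq_Icc, Real.closedBall_eq_Icc]
    exact ⟨hx, hy, hz⟩
  · intro x y z hp
    have : χ (x, y, z) = 1 := χ.one_of_mem_closedBall (Metric.ball_subset_closedBall hp)
    simp [this]

/-- Iterated integral over a box. -/
noncomputable def J3 (a1 b1 a2 b2 a3 b3 : ℝ) (F : ℝ → ℝ → ℝ → ℝ) : ℝ :=
  ∫ x in a1..b1, ∫ y in a2..b2, ∫ z in a3..b3, F x y z

lemma cont_in3 {F : ℝ → ℝ → ℝ → ℝ} (hF : Continuous (unc3 F)) (x y : ℝ) :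
    Continuous (fun z => F x y z) :=
  hF.comp (f := fun z : ℝ => (x, y, z)) (by fun_prop)

lemma cont_in23 {F : ℝ → ℝ → ℝ → ℝ} (hF : Continuous (unc3 F)) (a3 b3 : ℝ) :
    Continuous (fun p : ℝ × ℝ => ∫ z in a3..b3, F p.1 p.2 z) := by
  apply intervalIntegral.continuous_parametric_intervalIntegral_of_continuous'
  exact hF.comp (f := fun q : (ℝ × ℝ) × ℝ => (q.1.1, q.1.2, q.2)) (by fun_prop)

lemma cont_in2 {F : ℝ → ℝ → ℝ → ℝ} (hF : Continuous (unc3 F)) (a3 b3 x : ℝ) :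
    Continuous (fun y => ∫ z in a3..b3, F x y z) :=
  (cont_in23 hF a3 b3).comp (f := fun y : ℝ => (x, y)) (by fun_prop)

lemma cont_in1 {F : ℝ → ℝ → ℝ → ℝ} (hF : Continuous (unc3 F)) (a2 b2 a3 b3 : ℝ) :
    Continuous (fun x => ∫ y in a2..b2, ∫ z in a3..b3, F x y z) := by
  apply intervalIntegral.continuous_parametric_intervalIntegral_of_continuous'
  exact cont_in23 hF a3 b3

lemma J3_add (a1 b1 a2 b2 a3 b3 : ℝ) {F G : ℝ → ℝ → ℝ → ℝ} (hF : Continuous (unc3 F))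
    (hG : Continuous (unc3 G)) :
    J3 a1 b1 a2 b2 a3 b3 (fun x y z => F x y z + G x y z)
      = J3 a1 b1 a2 b2 a3 b3 F + J3 a1 b1 a2 b2 a3 b3 G := by
  unfold J3
  rw [← intervalIntegral.integral_add ((cont_in1 hF _ _ _ _).intervalIntegrable _ _)
    ((cont_in1 hG _ _ _ _).intervalIntegrable _ _)]
  congr 1; funext x
  rw [← intervalIntegral.integral_add ((cont_in2 hF _ _ _).intervalIntegrable _ _)
    ((cont_in2 hG _ _ _).intervalIntegrable _ _)]
  congr 1; funext y
  rw [← intervalIntegral.integral_add ((cont_in3 hF _ _).intervalIntegrable _ _)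
    ((cont_in3 hG _ _).intervalIntegrable _ _)]

lemma J3_smul (a1 b1 a2 b2 a3 b3 c : ℝ) (F : ℝ → ℝ → ℝ → ℝ) :
    J3 a1 b1 a2 b2 a3 b3 (fun x y z => c * F x y z) = c * J3 a1 b1 a2 b2 a3 b3 F := by
  simp only [J3, intervalIntegral.integral_const_mul]

lemma J3_mono {a1 b1 a2 b2 a3 b3 : ℝ} (h1 : a1 ≤ b1) (h2 : a2 ≤ b2) (h3 : a3 ≤ b3)
    {F G : ℝ → ℝ → ℝ → ℝ} (hF : Continuous (unc3 F)) (hG : Continuous (unc3 G))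
    (h : ∀ x ∈ Set.Icc a1 b1, ∀ y ∈ Set.Icc a2 b2, ∀ z ∈ Set.Icc a3 b3, F x y z ≤ G x y z) :
    J3 a1 b1 a2 b2 a3 b3 F ≤ J3 a1 b1 a2 b2 a3 b3 G := by
  unfold J3
  refine intervalIntegral.integral_mono_on h1 ((cont_in1 hF _ _ _ _).intervalIntegrable _ _)
    ((cont_in1 hG _ _ _ _).intervalIntegrable _ _) fun x hx => ?_
  refine intervalIntegral.integral_mono_on h2 ((cont_in2 hF _ _ _).intervalIntegrable _ _)
    ((cont_in2 hG _ _ _).intervalIntegrable _ _) fun y hy => ?_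
  exact intervalIntegral.integral_mono_on h3 ((cont_in3 hF _ _).intervalIntegrable _ _)
    ((cont_in3 hG _ _).intervalIntegrable _ _) fun z hz => h x hx y hy z hz

lemma J3_congr {a1 b1 a2 b2 a3 b3 : ℝ} (h1 : a1 ≤ b1) (h2 : a2 ≤ b2) (h3 : a3 ≤ b3)
    {F G : ℝ → ℝ → ℝ → ℝ}
    (h : ∀ x ∈ Set.Icc a1 b1, ∀ y ∈ Set.Icc a2 b2, ∀ z ∈ Set.Icc a3 b3, F x y z = G x y z) :
    J3 a1 b1 a2 b2 a3 b3 F = J3 a1 b1 a2 b2 a3 b3 G := by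
  unfold J3
  refine intervalIntegral.integral_congr fun x hx => ?_
  refine intervalIntegral.integral_congr fun y hy => ?_
  refine intervalIntegral.integral_congr fun z hz => ?_
  rw [Set.uIcc_of_le ‹_›] at hx hy hz
  exact h x hx y hy z hz

lemma J3_abs_le {a1 b1 a2 b2 a3 b3 : ℝ} (h1 : a1 ≤ b1) (h2 : a2 ≤ b2) (h3 : a3 ≤ b3)
    {F G : ℝ → ℝ → ℝ → ℝ} (hF : Continuous (unc3 F)) (hG : Continuous (unc3 G))
    (h : ∀ x ∈ Set.Icc a1 b1, ∀ y ∈ Set.Icc a2 b2, ∀ z ∈ Set.Icc a3 b3, |F x y z| ≤ G x y z) :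
    |J3 a1 b1 a2 b2 a3 b3 F| ≤ J3 a1 b1 a2 b2 a3 b3 G := by
  rw [abs_le]
  constructor
  · have := J3_mono h1 h2 h3 (F := fun x y z => (-1) * G x y z) (G := F)
      ((continuous_const (y := (-1 : ℝ))).mul hG) hF
      (fun x hx y hy z hz => by have := (abs_le.1 (h x hx y hy z hz)).1; linarith)
    rw [J3_smul] at this
    linarith
  · exact J3_mono h1 h2 h3 hF hG (fun x hx y hy z hz => (abs_le.1 (h x hx y hy z hz)).2)

lemma swap2 {f : ℝ → ℝ → ℝ} (hf : Continuous (fun p : ℝ × ℝ => f p.1 p.2)) (a b c d : ℝ) :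
    ∫ x in a..b, ∫ y in c..d, f x y = ∫ y in c..d, ∫ x in a..b, f x y := by
  apply intervalIntegral_intervalIntegral_swap
  have : IntegrableOn (Function.uncurry f) (Set.uIcc a b ×ˢ Set.uIcc c d) :=
    hf.continuousOn.integrableOn_compact (isCompact_uIcc.prod isCompact_uIcc)
  exact this.mono_set (Set.prod_mono Set.uIoc_subset_uIcc Set.uIoc_subset_uIcc)

lemma J3_swap23 (a1 b1 a2 b2 a3 b3 : ℝ) {F : ℝ → ℝ → ℝ → ℝ} (hF : Continuous (unc3 F)) :
    J3 a1 b1 a2 b2 a3 b3 F = J3 a1 b1 a3 b3 a2 b2 (fun x z y => F x y z) := by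
  unfold J3
  congr 1; funext x
  exact swap2 (hF.comp (f := fun p : ℝ × ℝ => (x, p.1, p.2)) (by fun_prop)) _ _ _ _

lemma J3_swap12 (a1 b1 a2 b2 a3 b3 : ℝ) {F : ℝ → ℝ → ℝ → ℝ} (hF : Continuous (unc3 F)) :
    J3 a1 b1 a2 b2 a3 b3 F = J3 a2 b2 a1 b1 a3 b3 (fun y x z => F x y z) := by
  unfold J3
  exact swap2 (cont_in23 hF _ _) _ _ _ _

/-- Integration by parts in one variable with vanishing boundary values. -/
lemma ibp1 {g g' p p' : ℝ → ℝ} {a b : ℝ} (hg : ∀ x, HasDerivAt g (g' x) x)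
    (hp : ∀ x, HasDerivAt p (p' x) x) (cg : Continuous g') (cp : Continuous p')
    (ha : p a = 0) (hb : p b = 0) :
    ∫ x in a..b, g x * p' x = ∫ x in a..b, (-1) * (g' x * p x) := by
  rw [intervalIntegral.integral_mul_deriv_eq_deriv_mul (fun x _ => hg x) (fun x _ => hp x)
    (cg.intervalIntegrable _ _) (cp.intervalIntegrable _ _), ha, hb,
    intervalIntegral.integral_const_mul]
  ring

lemma J3_ibp3 {a1 b1 a2 b2 a3 b3 : ℝ} {G G' : ℝ → ℝ → ℝ → ℝ} {p p' : ℝ → ℝ}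
    (hG : ∀ x y z, HasDerivAt (fun t => G x y t) (G' x y z) z)
    (hp : ∀ z, HasDerivAt p (p' z) z) (cG : Continuous (unc3 G')) (cp : Continuous p')
    (ha : p a3 = 0) (hb : p b3 = 0) :
    J3 a1 b1 a2 b2 a3 b3 (fun x y z => G x y z * p' z)
      = J3 a1 b1 a2 b2 a3 b3 (fun x y z => (-1) * (G' x y z * p z)) := by
  unfold J3
  congr 1; funext x; congr 1; funext y
  exact ibp1 (hG x y) hp (cont_in3 cG x y) cp ha hb

lemma J3_ibp2 {a1 b1 a2 b2 a3 b3 : ℝ} {G G' : ℝ → ℝ → ℝ → ℝ} {p p' : ℝ → ℝ}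
    (hG : ∀ x y z, HasDerivAt (fun t => G x t z) (G' x y z) y)
    (hp : ∀ z, HasDerivAt p (p' z) z) (cG0 : Continuous (unc3 G)) (cG : Continuous (unc3 G'))
    (cp : Continuous p') (ha : p a2 = 0) (hb : p b2 = 0) :
    J3 a1 b1 a2 b2 a3 b3 (fun x y z => G x y z * p' y)
      = J3 a1 b1 a2 b2 a3 b3 (fun x y z => (-1) * (G' x y z * p y)) := by
  have cp0 : Continuous p := continuous_iff_continuousAt.2 fun x => (hp x).continuousAt
  have e1 : Continuous (unc3 (fun x y z => G x y z * p' y)) :=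
    cG0.mul (cp.comp (f := fun q : ℝ × ℝ × ℝ => q.2.1) (by fun_prop))
  have e2 : Continuous (unc3 (fun x y z => (-1) * (G' x y z * p y))) :=
    continuous_const.mul (cG.mul (cp0.comp (f := fun q : ℝ × ℝ × ℝ => q.2.1) (by fun_prop)))
  rw [J3_swap23 _ _ _ _ _ _ e1, J3_swap23 _ _ _ _ _ _ e2]
  exact J3_ibp3 (G := fun x z y => G x y z) (G' := fun x z y => G' x y z)
    (fun x z y => hG x y z) hp
    (cG.comp (f := fun q : ℝ × ℝ × ℝ => (q.1, q.2.2, q.2.1)) (by fun_prop)) cp ha hb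

lemma J3_ibp1 {a1 b1 a2 b2 a3 b3 : ℝ} {G G' : ℝ → ℝ → ℝ → ℝ} {p p' : ℝ → ℝ}
    (hG : ∀ x y z, HasDerivAt (fun t => G t y z) (G' x y z) x)
    (hp : ∀ z, HasDerivAt p (p' z) z) (cG0 : Continuous (unc3 G)) (cG : Continuous (unc3 G'))
    (cp : Continuous p') (ha : p a1 = 0) (hb : p b1 = 0) :
    J3 a1 b1 a2 b2 a3 b3 (fun x y z => G x y z * p' x)
      = J3 a1 b1 a2 b2 a3 b3 (fun x y z => (-1) * (G' x y z * p x)) := by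
  have cp0 : Continuous p := continuous_iff_continuousAt.2 fun x => (hp x).continuousAt
  have e1 : Continuous (unc3 (fun x y z => G x y z * p' x)) :=
    cG0.mul (cp.comp (f := fun q : ℝ × ℝ × ℝ => q.1) (by fun_prop))
  have e2 : Continuous (unc3 (fun x y z => (-1) * (G' x y z * p x))) :=
    continuous_const.mul (cG.mul (cp0.comp (f := fun q : ℝ × ℝ × ℝ => q.1) (by fun_prop)))
  rw [J3_swap12 _ _ _ _ _ _ e1, J3_swap12 _ _ _ _ _ _ e2]
  exact J3_ibp2 (G := fun y x z => G x y z) (G' := fun y x z => G' x y z)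
    (fun y x z => hG x y z) hp
    (cG0.comp (f := fun q : ℝ × ℝ × ℝ => (q.2.1, q.1, q.2.2)) (by fun_prop))
    (cG.comp (f := fun q : ℝ × ℝ × ℝ => (q.2.1, q.1, q.2.2)) (by fun_prop)) cp ha hb

lemma amgm_opt {X A B : ℝ} (hA : 0 ≤ A) (hB : 0 ≤ B) (h : ∀ t > 0, X ≤ t * A + B / t) :
    X ≤ 2 * (Real.sqrt A * Real.sqrt B) := by
  obtain ⟨a, ha, rfl⟩ : ∃ a, 0 ≤ a ∧ A = a ^ 2 := ⟨√A, Real.sqrt_nonneg _, (Real.sq_sqrt hA).symm⟩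
  obtain ⟨b, hb, rfl⟩ : ∃ b, 0 ≤ b ∧ B = b ^ 2 := ⟨√B, Real.sqrt_nonneg _, (Real.sq_sqrt hB).symm⟩
  rw [Real.sqrt_sq ha, Real.sqrt_sq hb]
  apply le_of_forall_pos_le_add
  intro e he
  set d := e / (a + b + 1) with hd
  have hd0 : 0 < d := by positivity
  have hde : d * (a + b) ≤ e := by
    rw [hd, div_mul_eq_mul_div, div_le_iff₀ (by positivity)]
    nlinarith
  have h1 := h ((b + d) / (a + d)) (by positivity)
  have h2 : (b + d) / (a + d) * a ^ 2 ≤ (b + d) * a := by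
    rw [div_mul_eq_mul_div, div_le_iff₀ (by positivity)]
    have : 0 ≤ (b + d) * a * d := by positivity
    nlinarith
  have h3 : b ^ 2 / ((b + d) / (a + d)) ≤ b * (a + d) := by
    rw [div_div_eq_mul_div, div_le_iff₀ (by positivity)]
    have : 0 ≤ b * (a + d) * d := by positivity
    nlinarith
  nlinarith

lemma int_sq (a b c h : ℝ) :
    ∫ x in (c - h)..(c + h), (2 * a + 6 * b * (x - c)) ^ 2 = 8 * a ^ 2 * h + 24 * b ^ 2 * h ^ 3 := by
  have hd : ∀ x ∈ Set.uIcc (c - h) (c + h), HasDerivAt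
      (fun x => 4 * a ^ 2 * (x - c) + 12 * a * b * (x - c) ^ 2 + 12 * b ^ 2 * (x - c) ^ 3)
      ((2 * a + 6 * b * (x - c)) ^ 2) x := by
    intro x _
    have h0 : HasDerivAt (fun x => x - c) 1 x := (hasDerivAt_id x).sub_const c
    refine HasDerivAt.congr_deriv (((h0.const_mul (4 * a ^ 2)).add
      ((h0.pow 2).const_mul (12 * a * b))).add ((h0.pow 3).const_mul (12 * b ^ 2))) ?_
    push_cast
    ring
  rw [intervalIntegral.integral_eq_sub_of_hasDerivAt hd
    (Continuous.intervalIntegrable (by fun_prop) _ _)]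
  ring

/-- Density of the squared `H⁴` seminorm. -/
noncomputable def D4 (u : ℝ → ℝ → ℝ → ℝ) : ℝ → ℝ → ℝ → ℝ := fun x y z =>
    (qd1 (qd1 (qd1 (qd1 u))) x y z) ^ 2 + (qd2 (qd2 (qd2 (qd2 u))) x y z) ^ 2
      + (qd3 (qd3 (qd3 (qd3 u))) x y z) ^ 2
      + 4 * (qd1 (qd1 (qd1 (qd2 u))) x y z) ^ 2
      + 4 * (qd1 (qd1 (qd1 (qd3 u))) x y z) ^ 2
      + 4 * (qd1 (qd2 (qd2 (qd2 u))) x y z) ^ 2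
      + 4 * (qd2 (qd2 (qd2 (qd3 u))) x y z) ^ 2
      + 4 * (qd1 (qd3 (qd3 (qd3 u))) x y z) ^ 2
      + 4 * (qd2 (qd3 (qd3 (qd3 u))) x y z) ^ 2
      + 6 * (qd1 (qd1 (qd2 (qd2 u))) x y z) ^ 2
      + 6 * (qd1 (qd1 (qd3 (qd3 u))) x y z) ^ 2
      + 6 * (qd2 (qd2 (qd3 (qd3 u))) x y z) ^ 2
      + 12 * (qd1 (qd1 (qd2 (qd3 u))) x y z) ^ 2
      + 12 * (qd1 (qd2 (qd2 (qd3 u))) x y z) ^ 2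
      + 12 * (qd1 (qd2 (qd3 (qd3 u))) x y z) ^ 2

/-- Density of the squared `H²` seminorm. -/
noncomputable def D2 (v : ℝ → ℝ → ℝ → ℝ) : ℝ → ℝ → ℝ → ℝ := fun x y z =>
    (qd1 (qd1 v) x y z) ^ 2 + (qd2 (qd2 v) x y z) ^ 2 + (qd3 (qd3 v) x y z) ^ 2
      + 2 * (qd1 (qd2 v) x y z) ^ 2 + 2 * (qd1 (qd3 v) x y z) ^ 2
      + 2 * (qd2 (qd3 v) x y z) ^ 2

lemma semiH4Box_eq (u : ℝ → ℝ → ℝ → ℝ) (a1 b1 a2 b2 a3 b3 : ℝ) :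
    semiH4Box u a1 b1 a2 b2 a3 b3 = Real.sqrt (J3 a1 b1 a2 b2 a3 b3 (D4 u)) := rfl

lemma semiH2Box_eq (u : ℝ → ℝ → ℝ → ℝ) (a1 b1 a2 b2 a3 b3 : ℝ) :
    semiH2Box u a1 b1 a2 b2 a3 b3 = Real.sqrt (J3 a1 b1 a2 b2 a3 b3 (D2 u)) := rfl

/-- The Laplacian. -/
noncomputable def Lap (u : ℝ → ℝ → ℝ → ℝ) : ℝ → ℝ → ℝ → ℝ :=
  fun a b c => qd1 (qd1 u) a b c + qd2 (qd2 u) a b c + qd3 (qd3 u) a b c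

/-- One-dimensional interpolation error. -/
def qq (a b c h x : ℝ) : ℝ := a * ((x - c) ^ 2 - h ^ 2) + b * ((x - c) ^ 3 - h ^ 2 * (x - c))

/-- Derivative of the one-dimensional interpolation error. -/
def dqq (a b c h x : ℝ) : ℝ := a * (2 * (x - c)) + b * (3 * (x - c) ^ 2 - h ^ 2)

lemma qq_hasDerivAt (a b c h x : ℝ) : HasDerivAt (qq a b c h) (dqq a b c h x) x := by
  have h0 : HasDerivAt (fun x => x - c) 1 x := (hasDerivAt_id x).sub_const c
  refine HasDerivAt.congr_deriv ((((h0.pow 2).sub_const (h ^ 2)).const_mul a).add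
    (((h0.pow 3).sub (h0.const_mul (h ^ 2))).const_mul b)) ?_
  simp only [dqq]
  push_cast
  ring

lemma qq_cont (a b c h : ℝ) : Continuous (qq a b c h) := by unfold qq; fun_prop

lemma dqq_cont (a b c h : ℝ) : Continuous (dqq a b c h) := by unfold dqq; fun_prop

lemma qq_bound {a b c h x : ℝ} (hx : x ∈ Set.Icc (c - h) (c + h)) :
    (qq a b c h x) ^ 2 ≤ 2 * h ^ 4 * (a ^ 2 + h ^ 2 * b ^ 2) := by
  obtain ⟨s, rfl⟩ : ∃ s, x = c + s := ⟨x - c, by ring⟩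
  have hs : s ^ 2 ≤ h ^ 2 := by
    apply sq_le_sq'
    · linarith [hx.1]
    · linarith [hx.2]
  have e : qq a b c h (c + s) = (s ^ 2 - h ^ 2) * (a + b * s) := by unfold qq; ring
  have h1 : (s ^ 2 - h ^ 2) ^ 2 ≤ h ^ 4 := by nlinarith [sq_nonneg s]
  have h2 : (a + b * s) ^ 2 ≤ 2 * (a ^ 2 + h ^ 2 * b ^ 2) := by
    nlinarith [sq_nonneg (a - b * s), mul_le_mul_of_nonneg_right hs (sq_nonneg b)]
  rw [e, mul_pow]
  calc _ ≤ h ^ 4 * (2 * (a ^ 2 + h ^ 2 * b ^ 2)) :=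
        mul_le_mul h1 h2 (sq_nonneg _) (by positivity)
    _ = _ := by ring

lemma lap_dd {v : ℝ → ℝ → ℝ → ℝ} (hv : ContDiff ℝ 4 (unc3 v)) :
    qd1 (qd1 (Lap v)) = (fun x y z => qd1 (qd1 (qd1 (qd1 v))) x y z
      + qd1 (qd1 (qd2 (qd2 v))) x y z + qd1 (qd1 (qd3 (qd3 v))) x y z) ∧
    qd2 (qd2 (Lap v)) = (fun x y z => qd1 (qd1 (qd2 (qd2 v))) x y z
      + qd2 (qd2 (qd2 (qd2 v))) x y z + qd2 (qd2 (qd3 (qd3 v))) x y z) ∧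
    qd3 (qd3 (Lap v)) = (fun x y z => qd1 (qd1 (qd3 (qd3 v))) x y z
      + qd2 (qd2 (qd3 (qd3 v))) x y z + qd3 (qd3 (qd3 (qd3 v))) x y z) := by
  have a1 : ContDiff ℝ 2 (unc3 (qd1 (qd1 v))) := qd1_smooth 2 (qd1_smooth 3 hv)
  have a2 : ContDiff ℝ 2 (unc3 (qd2 (qd2 v))) := qd2_smooth 2 (qd2_smooth 3 hv)
  have a3 : ContDiff ℝ 2 (unc3 (qd3 (qd3 v))) := qd3_smooth 2 (qd3_smooth 3 hv)
  have l1 : ∀ {f : ℝ → ℝ → ℝ → ℝ}, ContDiff ℝ 2 (unc3 f) → ContDiff ℝ 1 (unc3 f) :=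
    fun hf => hf.of_le (by norm_num)
  have b12 : ContDiff ℝ 1 (unc3 (fun a b c => qd1 (qd1 v) a b c + qd2 (qd2 v) a b c)) :=
    (l1 a1).add (l1 a2)
  refine ⟨?_, ?_, ?_⟩
  · unfold Lap
    rw [qd1_add b12 (l1 a3), qd1_add (l1 a1) (l1 a2),
      qd1_add (f := fun a b c => qd1 (qd1 (qd1 v)) a b c + qd1 (qd2 (qd2 v)) a b c)
        (ContDiff.add (qd1_smooth 1 a1) (qd1_smooth 1 a2)) (qd1_smooth 1 a3),
      qd1_add (qd1_smooth 1 a1) (qd1_smooth 1 a2)]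
  · rw [← qd2211 hv]
    unfold Lap
    rw [qd2_add b12 (l1 a3), qd2_add (l1 a1) (l1 a2),
      qd2_add (f := fun a b c => qd2 (qd1 (qd1 v)) a b c + qd2 (qd2 (qd2 v)) a b c)
        (ContDiff.add (qd2_smooth 1 a1) (qd2_smooth 1 a2)) (qd2_smooth 1 a3),
      qd2_add (qd2_smooth 1 a1) (qd2_smooth 1 a2)]
  · rw [← qd3311 hv, ← qd3322 hv]
    unfold Lap
    rw [qd3_add b12 (l1 a3), qd3_add (l1 a1) (l1 a2),
      qd3_add (f := fun a b c => qd3 (qd1 (qd1 v)) a b c + qd3 (qd2 (qd2 v)) a b c)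
        (ContDiff.add (qd3_smooth 1 a1) (qd3_smooth 1 a2)) (qd3_smooth 1 a3),
      qd3_add (qd3_smooth 1 a1) (qd3_smooth 1 a2)]

lemma lap_smooth {v : ℝ → ℝ → ℝ → ℝ} (hv : ContDiff ℝ 4 (unc3 v)) :
    ContDiff ℝ 2 (unc3 (Lap v)) := by
  have a1 : ContDiff ℝ 2 (unc3 (qd1 (qd1 v))) := qd1_smooth 2 (qd1_smooth 3 hv)
  have a2 : ContDiff ℝ 2 (unc3 (qd2 (qd2 v))) := qd2_smooth 2 (qd2_smooth 3 hv)
  have a3 : ContDiff ℝ 2 (unc3 (qd3 (qd3 v))) := qd3_smooth 2 (qd3_smooth 3 hv)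
  exact (a1.add a2).add a3

lemma qd1_hd {f : ℝ → ℝ → ℝ → ℝ} (hf : ContDiff ℝ 1 (unc3 f)) (x y z : ℝ) :
    HasDerivAt (fun t => f t y z) (qd1 f x y z) x :=
  (qd1_hasDerivAt hf x y z).differentiableAt.hasDerivAt

lemma qd2_hd {f : ℝ → ℝ → ℝ → ℝ} (hf : ContDiff ℝ 1 (unc3 f)) (x y z : ℝ) :
    HasDerivAt (fun t => f x t z) (qd2 f x y z) y :=
  (qd2_hasDerivAt hf x y z).differentiableAt.hasDerivAt

lemma qd3_hd {f : ℝ → ℝ → ℝ → ℝ} (hf : ContDiff ℝ 1 (unc3 f)) (x y z : ℝ) :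
    HasDerivAt (fun t => f x y t) (qd3 f x y z) z :=
  (qd3_hasDerivAt hf x y z).differentiableAt.hasDerivAt

/-- The volume term after integrating by parts in each direction. -/
lemma ibp_all {h c1 c2 c3 a1 a2 a3 b1 b2 b3 : ℝ} {L : ℝ → ℝ → ℝ → ℝ}
    (hL : ContDiff ℝ 2 (unc3 L)) :
    J3 (c1 - h) (c1 + h) (c2 - h) (c2 + h) (c3 - h) (c3 + h)
      (fun x y z => qd1 L x y z * dqq a1 b1 c1 h x + qd2 L x y z * dqq a2 b2 c2 h y
        + qd3 L x y z * dqq a3 b3 c3 h z)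
    = J3 (c1 - h) (c1 + h) (c2 - h) (c2 + h) (c3 - h) (c3 + h)
      (fun x y z => (-1) * (qd1 (qd1 L) x y z * qq a1 b1 c1 h x)
        + (-1) * (qd2 (qd2 L) x y z * qq a2 b2 c2 h y)
        + (-1) * (qd3 (qd3 L) x y z * qq a3 b3 c3 h z)) := by
  have s1 : ContDiff ℝ 1 (unc3 (qd1 L)) := qd1_smooth 1 hL
  have s2 : ContDiff ℝ 1 (unc3 (qd2 L)) := qd2_smooth 1 hL
  have s3 : ContDiff ℝ 1 (unc3 (qd3 L)) := qd3_smooth 1 hL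
  have t1 : Continuous (unc3 (qd1 (qd1 L))) := (qd1_smooth 0 s1).continuous
  have t2 : Continuous (unc3 (qd2 (qd2 L))) := (qd2_smooth 0 s2).continuous
  have t3 : Continuous (unc3 (qd3 (qd3 L))) := (qd3_smooth 0 s3).continuous
  have p1 : Continuous (fun p : ℝ × ℝ × ℝ => p.1) := by fun_prop
  have p2 : Continuous (fun p : ℝ × ℝ × ℝ => p.2.1) := by fun_prop
  have p3 : Continuous (fun p : ℝ × ℝ × ℝ => p.2.2) := by fun_prop
  have A1 : Continuous (unc3 fun x y z => qd1 L x y z * dqq a1 b1 c1 h x) :=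
    s1.continuous.mul ((dqq_cont a1 b1 c1 h).comp p1)
  have A2 : Continuous (unc3 fun x y z => qd2 L x y z * dqq a2 b2 c2 h y) :=
    s2.continuous.mul ((dqq_cont a2 b2 c2 h).comp p2)
  have A3 : Continuous (unc3 fun x y z => qd3 L x y z * dqq a3 b3 c3 h z) :=
    s3.continuous.mul ((dqq_cont a3 b3 c3 h).comp p3)
  have B1 : Continuous (unc3 fun x y z => (-1) * (qd1 (qd1 L) x y z * qq a1 b1 c1 h x)) :=
    continuous_const.mul (t1.mul ((qq_cont a1 b1 c1 h).comp p1))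
  have B2 : Continuous (unc3 fun x y z => (-1) * (qd2 (qd2 L) x y z * qq a2 b2 c2 h y)) :=
    continuous_const.mul (t2.mul ((qq_cont a2 b2 c2 h).comp p2))
  have B3 : Continuous (unc3 fun x y z => (-1) * (qd3 (qd3 L) x y z * qq a3 b3 c3 h z)) :=
    continuous_const.mul (t3.mul ((qq_cont a3 b3 c3 h).comp p3))
  have z1 : ∀ a b c, qq a b c h (c - h) = 0 := by intro a b c; unfold qq; ring
  have z2 : ∀ a b c, qq a b c h (c + h) = 0 := by intro a b c; unfold qq; ring
  rw [J3_add _ _ _ _ _ _ (F := fun x y z => qd1 L x y z * dqq a1 b1 c1 h x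
      + qd2 L x y z * dqq a2 b2 c2 h y) (A1.add A2) A3, J3_add _ _ _ _ _ _ A1 A2,
    J3_add _ _ _ _ _ _ (F := fun x y z => (-1) * (qd1 (qd1 L) x y z * qq a1 b1 c1 h x)
        + (-1) * (qd2 (qd2 L) x y z * qq a2 b2 c2 h y)) (B1.add B2) B3, J3_add _ _ _ _ _ _ B1 B2,
    J3_ibp1 (qd1_hd s1) (qq_hasDerivAt a1 b1 c1 h) s1.continuous t1 (dqq_cont _ _ _ _)
      (z1 _ _ _) (z2 _ _ _),
    J3_ibp2 (qd2_hd s2) (qq_hasDerivAt a2 b2 c2 h) s2.continuous t2 (dqq_cont _ _ _ _)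
      (z1 _ _ _) (z2 _ _ _),
    J3_ibp3 (qd3_hd s3) (qq_hasDerivAt a3 b3 c3 h) t3 (dqq_cont _ _ _ _)
      (z1 _ _ _) (z2 _ _ _)]

lemma D4_cont {v : ℝ → ℝ → ℝ → ℝ} (hv : ContDiff ℝ 4 (unc3 v)) : Continuous (unc3 (D4 v)) := by
  have d1 : ContDiff ℝ 3 (unc3 (qd1 v)) := qd1_smooth 3 hv
  have d2 : ContDiff ℝ 3 (unc3 (qd2 v)) := qd2_smooth 3 hv
  have d3 : ContDiff ℝ 3 (unc3 (qd3 v)) := qd3_smooth 3 hv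
  have k : ∀ (c : ℝ) {f : ℝ → ℝ → ℝ → ℝ}, ContDiff ℝ ((0 : ℕ) : ℕ∞) (unc3 f) →
      Continuous (unc3 fun x y z => c * (f x y z) ^ 2) :=
    fun c f hf => continuous_const.mul (hf.continuous.pow 2)
  have k1 : ∀ {f : ℝ → ℝ → ℝ → ℝ}, ContDiff ℝ ((0 : ℕ) : ℕ∞) (unc3 f) →
      Continuous (unc3 fun x y z => (f x y z) ^ 2) :=
    fun hf => hf.continuous.pow 2
  have e1111 := k1 (qd1_smooth 0 (qd1_smooth 1 (qd1_smooth 2 d1)))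
  have e2222 := k1 (qd2_smooth 0 (qd2_smooth 1 (qd2_smooth 2 d2)))
  have e3333 := k1 (qd3_smooth 0 (qd3_smooth 1 (qd3_smooth 2 d3)))
  have e1112 := k 4 (qd1_smooth 0 (qd1_smooth 1 (qd1_smooth 2 d2)))
  have e1113 := k 4 (qd1_smooth 0 (qd1_smooth 1 (qd1_smooth 2 d3)))
  have e1222 := k 4 (qd1_smooth 0 (qd2_smooth 1 (qd2_smooth 2 d2)))
  have e2223 := k 4 (qd2_smooth 0 (qd2_smooth 1 (qd2_smooth 2 d3)))
  have e1333 := k 4 (qd1_smooth 0 (qd3_smooth 1 (qd3_smooth 2 d3)))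
  have e2333 := k 4 (qd2_smooth 0 (qd3_smooth 1 (qd3_smooth 2 d3)))
  have e1122 := k 6 (qd1_smooth 0 (qd1_smooth 1 (qd2_smooth 2 d2)))
  have e1133 := k 6 (qd1_smooth 0 (qd1_smooth 1 (qd3_smooth 2 d3)))
  have e2233 := k 6 (qd2_smooth 0 (qd2_smooth 1 (qd3_smooth 2 d3)))
  have e1123 := k 12 (qd1_smooth 0 (qd1_smooth 1 (qd2_smooth 2 d3)))
  have e1223 := k 12 (qd1_smooth 0 (qd2_smooth 1 (qd2_smooth 2 d3)))
  have e1233 := k 12 (qd1_smooth 0 (qd2_smooth 1 (qd3_smooth 2 d3)))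
  exact (((((((((((((e1111.add e2222).add e3333).add e1112).add e1113).add e1222).add e2223).add
    e1333).add e2333).add e1122).add e1133).add e2233).add e1123).add e1223).add e1233

lemma D2_cont {v : ℝ → ℝ → ℝ → ℝ} (hv : ContDiff ℝ 2 (unc3 v)) : Continuous (unc3 (D2 v)) := by
  have d1 : ContDiff ℝ 1 (unc3 (qd1 v)) := qd1_smooth 1 hv
  have d2 : ContDiff ℝ 1 (unc3 (qd2 v)) := qd2_smooth 1 hv
  have d3 : ContDiff ℝ 1 (unc3 (qd3 v)) := qd3_smooth 1 hv
  have k : ∀ (c : ℝ) {f : ℝ → ℝ → ℝ → ℝ}, ContDiff ℝ ((0 : ℕ) : ℕ∞) (unc3 f) →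
      Continuous (unc3 fun x y z => c * (f x y z) ^ 2) :=
    fun c f hf => continuous_const.mul (hf.continuous.pow 2)
  have k1 : ∀ {f : ℝ → ℝ → ℝ → ℝ}, ContDiff ℝ ((0 : ℕ) : ℕ∞) (unc3 f) →
      Continuous (unc3 fun x y z => (f x y z) ^ 2) :=
    fun hf => hf.continuous.pow 2
  exact (((((k1 (qd1_smooth 0 d1)).add (k1 (qd2_smooth 0 d2))).add (k1 (qd3_smooth 0 d3))).add
    (k 2 (qd1_smooth 0 d2))).add (k 2 (qd1_smooth 0 d3))).add (k 2 (qd2_smooth 0 d3))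

lemma D4_congr {V : Set (ℝ × ℝ × ℝ)} (hV : IsOpen V) {u v : ℝ → ℝ → ℝ → ℝ} (h : EqOn3 V u v) :
    EqOn3 V (D4 u) (D4 v) := by
  intro x y z hp
  have d1 := h.d1 hV
  have d2 := h.d2 hV
  have d3 := h.d3 hV
  have d22 := d2.d2 hV
  have d33 := d3.d3 hV
  simp only [D4, (((d1.d1 hV).d1 hV).d1 hV) x y z hp, ((d22.d2 hV).d2 hV) x y z hp,
    ((d33.d3 hV).d3 hV) x y z hp, (((d2.d1 hV).d1 hV).d1 hV) x y z hp,
    (((d3.d1 hV).d1 hV).d1 hV) x y z hp, ((d22.d2 hV).d1 hV) x y z hp,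
    (((d3.d2 hV).d2 hV).d2 hV) x y z hp, ((d33.d3 hV).d1 hV) x y z hp,
    ((d33.d3 hV).d2 hV) x y z hp, ((d22.d1 hV).d1 hV) x y z hp,
    ((d33.d1 hV).d1 hV) x y z hp, ((d33.d2 hV).d2 hV) x y z hp,
    (((d3.d2 hV).d1 hV).d1 hV) x y z hp, (((d3.d2 hV).d2 hV).d1 hV) x y z hp,
    ((d33.d2 hV).d1 hV) x y z hp]

lemma lap_congr {V : Set (ℝ × ℝ × ℝ)} (hV : IsOpen V) {u v : ℝ → ℝ → ℝ → ℝ} (h : EqOn3 V u v) :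
    EqOn3 V (Lap u) (Lap v) :=
  (((h.d1 hV).d1 hV).add ((h.d2 hV).d2 hV)).add ((h.d3 hV).d3 hV)

lemma J3_const (a1 b1 a2 b2 a3 b3 c : ℝ) :
    J3 a1 b1 a2 b2 a3 b3 (fun _ _ _ => c) = (b1 - a1) * ((b2 - a2) * ((b3 - a3) * c)) := by
  simp [J3]
  ring

lemma J3_quad (h c1 c2 c3 a1 a2 a3 b1 b2 b3 : ℝ) :
    J3 (c1 - h) (c1 + h) (c2 - h) (c2 + h) (c3 - h) (c3 + h)
      (fun x y z => (2 * a1 + 6 * b1 * (x - c1)) ^ 2 + (2 * a2 + 6 * b2 * (y - c2)) ^ 2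
        + (2 * a3 + 6 * b3 * (z - c3)) ^ 2)
    = 4 * h ^ 2 * ((8 * a1 ^ 2 * h + 24 * b1 ^ 2 * h ^ 3) + (8 * a2 ^ 2 * h + 24 * b2 ^ 2 * h ^ 3)
      + (8 * a3 ^ 2 * h + 24 * b3 ^ 2 * h ^ 3)) := by
  have A1 : Continuous (unc3 fun x y z => (2 * a1 + 6 * b1 * (x - c1)) ^ 2) := by
    unfold unc3; fun_prop
  have A2 : Continuous (unc3 fun x y z => (2 * a2 + 6 * b2 * (y - c2)) ^ 2) := by
    unfold unc3; fun_prop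
  have A3 : Continuous (unc3 fun x y z => (2 * a3 + 6 * b3 * (z - c3)) ^ 2) := by
    unfold unc3; fun_prop
  have A12 : Continuous (unc3 fun x y z => (2 * a1 + 6 * b1 * (x - c1)) ^ 2
      + (2 * a2 + 6 * b2 * (y - c2)) ^ 2) := by
    unfold unc3; fun_prop
  rw [J3_add _ _ _ _ _ _ (F := fun x y z => (2 * a1 + 6 * b1 * (x - c1)) ^ 2
    + (2 * a2 + 6 * b2 * (y - c2)) ^ 2) A12 A3, J3_add _ _ _ _ _ _ A1 A2]
  simp only [J3, intervalIntegral.integral_const, smul_eq_mul, intervalIntegral.integral_const_mul,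
    int_sq]
  ring

lemma core {h c1 c2 c3 a1 a2 a3 b1 b2 b3 : ℝ} (hh : 0 < h) {v : ℝ → ℝ → ℝ → ℝ}
    (hv : ContDiff ℝ 4 (unc3 v)) {t : ℝ} (ht : 0 < t) :
    |J3 (c1 - h) (c1 + h) (c2 - h) (c2 + h) (c3 - h) (c3 + h)
      (fun x y z => qd1 (Lap v) x y z * dqq a1 b1 c1 h x + qd2 (Lap v) x y z * dqq a2 b2 c2 h y
        + qd3 (Lap v) x y z * dqq a3 b3 c3 h z)|
    ≤ t * (9 * J3 (c1 - h) (c1 + h) (c2 - h) (c2 + h) (c3 - h) (c3 + h) (D4 v))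
      + (16 * h ^ 7 * ((a1 ^ 2 + h ^ 2 * b1 ^ 2) + (a2 ^ 2 + h ^ 2 * b2 ^ 2)
        + (a3 ^ 2 + h ^ 2 * b3 ^ 2))) / t := by
  rw [ibp_all (lap_smooth hv)]
  obtain ⟨l1, l2, l3⟩ := lap_dd hv
  set M := (a1 ^ 2 + h ^ 2 * b1 ^ 2) + (a2 ^ 2 + h ^ 2 * b2 ^ 2) + (a3 ^ 2 + h ^ 2 * b3 ^ 2) with hM
  have e : t * (9 * J3 (c1 - h) (c1 + h) (c2 - h) (c2 + h) (c3 - h) (c3 + h) (D4 v))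
      + (16 * h ^ 7 * M) / t
      = J3 (c1 - h) (c1 + h) (c2 - h) (c2 + h) (c3 - h) (c3 + h)
        (fun x y z => (t * 9) * D4 v x y z + (2 * h ^ 4 * M) / t) := by
    rw [J3_add _ _ _ _ _ _ (F := fun x y z => (t * 9) * D4 v x y z)
      (G := fun _ _ _ => (2 * h ^ 4 * M) / t)
      (continuous_const.mul (D4_cont hv)) continuous_const, J3_smul, J3_const]
    ring
  rw [e]
  have hL := lap_smooth hv
  have t1 : Continuous (unc3 (qd1 (qd1 (Lap v)))) := (qd1_smooth 0 (qd1_smooth 1 hL)).continuous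
  have t2 : Continuous (unc3 (qd2 (qd2 (Lap v)))) := (qd2_smooth 0 (qd2_smooth 1 hL)).continuous
  have t3 : Continuous (unc3 (qd3 (qd3 (Lap v)))) := (qd3_smooth 0 (qd3_smooth 1 hL)).continuous
  have p1 : Continuous (fun p : ℝ × ℝ × ℝ => p.1) := by fun_prop
  have p2 : Continuous (fun p : ℝ × ℝ × ℝ => p.2.1) := by fun_prop
  have p3 : Continuous (fun p : ℝ × ℝ × ℝ => p.2.2) := by fun_prop
  have B1 : Continuous (unc3 fun x y z => (-1) * (qd1 (qd1 (Lap v)) x y z * qq a1 b1 c1 h x)) :=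
    continuous_const.mul (t1.mul ((qq_cont a1 b1 c1 h).comp p1))
  have B2 : Continuous (unc3 fun x y z => (-1) * (qd2 (qd2 (Lap v)) x y z * qq a2 b2 c2 h y)) :=
    continuous_const.mul (t2.mul ((qq_cont a2 b2 c2 h).comp p2))
  have B3 : Continuous (unc3 fun x y z => (-1) * (qd3 (qd3 (Lap v)) x y z * qq a3 b3 c3 h z)) :=
    continuous_const.mul (t3.mul ((qq_cont a3 b3 c3 h).comp p3))
  refine J3_abs_le (by linarith) (by linarith) (by linarith) ((B1.add B2).add B3)
    ((continuous_const.mul (D4_cont hv)).add continuous_const) ?_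
  intro x hx y hy z hz
  have q1 := qq_bound (a := a1) (b := b1) hx
  have q2 := qq_bound (a := a2) (b := b2) hy
  have q3 := qq_bound (a := a3) (b := b3) hz
  have young : ∀ g q : ℝ, |g * q| ≤ t * g ^ 2 + q ^ 2 / t := by
    intro g q
    have hs : t * g ^ 2 + q ^ 2 / t = ((t * |g|) ^ 2 + |q| ^ 2) / t := by
      rw [mul_pow, sq_abs, sq_abs]; field_simp
    rw [hs, le_div_iff₀ ht, abs_mul]
    nlinarith [sq_nonneg (t * |g| - |q|), abs_nonneg g, abs_nonneg q,
      mul_nonneg ht.le (mul_nonneg (abs_nonneg g) (abs_nonneg q))]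
  have sq3 : ∀ a b c : ℝ, (a + b + c) ^ 2 ≤ 3 * (a ^ 2 + b ^ 2 + c ^ 2) := by
    intro a b c
    nlinarith [sq_nonneg (a - b), sq_nonneg (a - c), sq_nonneg (b - c)]
  have g : qd1 (qd1 (Lap v)) x y z ^ 2 + qd2 (qd2 (Lap v)) x y z ^ 2
      + qd3 (qd3 (Lap v)) x y z ^ 2 ≤ 9 * D4 v x y z := by
    rw [l1, l2, l3]
    refine (add_le_add (add_le_add (sq3 _ _ _) (sq3 _ _ _)) (sq3 _ _ _)).trans ?_
    rw [← sub_nonneg]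
    unfold D4
    ring_nf
    positivity
  have y1 := young (qd1 (qd1 (Lap v)) x y z) (qq a1 b1 c1 h x)
  have y2 := young (qd2 (qd2 (Lap v)) x y z) (qq a2 b2 c2 h y)
  have y3 := young (qd3 (qd3 (Lap v)) x y z) (qq a3 b3 c3 h z)
  have s : (qq a1 b1 c1 h x ^ 2 + qq a2 b2 c2 h y ^ 2 + qq a3 b3 c3 h z ^ 2) / t
      ≤ (2 * h ^ 4 * M) / t := by
    apply div_le_div_of_nonneg_right _ ht.le
    rw [hM]
    linarith
  rw [add_div, add_div] at s
  have g' := mul_le_mul_of_nonneg_left g ht.le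
  have tri : |(-1) * (qd1 (qd1 (Lap v)) x y z * qq a1 b1 c1 h x)
        + (-1) * (qd2 (qd2 (Lap v)) x y z * qq a2 b2 c2 h y)
        + (-1) * (qd3 (qd3 (Lap v)) x y z * qq a3 b3 c3 h z)|
      ≤ |qd1 (qd1 (Lap v)) x y z * qq a1 b1 c1 h x| + |qd2 (qd2 (Lap v)) x y z * qq a2 b2 c2 h y|
        + |qd3 (qd3 (Lap v)) x y z * qq a3 b3 c3 h z| := by
    refine (abs_add_three _ _ _).trans (le_of_eq ?_)
    simp only [abs_mul, abs_neg, abs_one, one_mul]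
  linarith

lemma shape_smooth {w : ℝ → ℝ → ℝ → ℝ} (hw : MorleyShape3 w) : ContDiff ℝ 2 (unc3 w) := by
  obtain ⟨k0, k1, k2, k3, k4, k5, k6, k7, k8, k9, k10, k11, k12, k13, hw⟩ := hw
  unfold unc3
  simp only [hw]
  fun_prop

/-- Algebraic description of the interpolation error and of the pure second derivatives. -/
lemma shape_data {w : ℝ → ℝ → ℝ → ℝ} (hw : MorleyShape3 w) {h : ℝ} (hh : 0 < h) (c1 c2 c3 : ℝ) :
    ∃ a1 b1 a2 b2 a3 b3 : ℝ,
      (∀ x y z, w x y z - IK3 w c1 c2 c3 h x y z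
        = qq a1 b1 c1 h x + qq a2 b2 c2 h y + qq a3 b3 c3 h z) ∧
      (∀ x y z, qd1 (qd1 w) x y z = 2 * a1 + 6 * b1 * (x - c1)) ∧
      (∀ x y z, qd2 (qd2 w) x y z = 2 * a2 + 6 * b2 * (y - c2)) ∧
      (∀ x y z, qd3 (qd3 w) x y z = 2 * a3 + 6 * b3 * (z - c3)) := by
  obtain ⟨k0, k1, k2, k3, k4, k5, k6, k7, k8, k9, k10, k11, k12, k13, hw⟩ := hw
  have key : ∀ (r0 r1 r2 r3 c : ℝ) (f : ℝ → ℝ),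
      (∀ t, f t = r0 + r1 * t + r2 * t ^ 2 + r3 * t ^ 3) →
      ∀ t, deriv f t = r1 + 2 * r2 * t + 3 * r3 * t ^ 2 := by
    intro r0 r1 r2 r3 c f hf t
    obtain rfl : f = fun t => r0 + r1 * t + r2 * t ^ 2 + r3 * t ^ 3 := funext hf
    have h0 : HasDerivAt (fun x : ℝ => x) 1 t := hasDerivAt_id t
    have h1 : HasDerivAt (fun t : ℝ => r0 + r1 * t + r2 * t ^ 2 + r3 * t ^ 3) _ t :=
      (((h0.const_mul r1).const_add r0).add ((h0.pow 2).const_mul r2)).add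
        ((h0.pow 3).const_mul r3)
    rw [h1.deriv]
    push_cast
    ring
  refine ⟨k4 + 3 * k10 * c1, k10, k5 + 3 * k11 * c2, k11, k6 + 3 * k12 * c3, k12, ?_, ?_, ?_, ?_⟩
  · intro x y z
    simp only [IK3, hw, qq]
    field_simp
    ring
  · intro x y z
    have e : ∀ t, qd1 w t y z = (k1 + k7 * y + k8 * z + k13 * (y * z)) + 2 * k4 * t
        + 3 * k10 * t ^ 2 := fun t =>
      key (k0 + k2 * y + k3 * z + k5 * y ^ 2 + k6 * z ^ 2 + k9 * (y * z) + k11 * y ^ 3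
        + k12 * z ^ 3) (k1 + k7 * y + k8 * z + k13 * (y * z)) k4 k10 0
        (fun t => w t y z) (fun t => by rw [hw]; ring) t
    have e2 := key (k1 + k7 * y + k8 * z + k13 * (y * z)) (2 * k4) (3 * k10) 0 0 (fun t => qd1 w t y z) (fun t => by rw [e]; ring) x
    exact e2.trans (by ring)
  · intro x y z
    have e : ∀ t, qd2 w x t z = (k2 + k7 * x + k9 * z + k13 * (x * z)) + 2 * k5 * t
        + 3 * k11 * t ^ 2 := fun t =>
      key (k0 + k1 * x + k3 * z + k4 * x ^ 2 + k6 * z ^ 2 + k8 * (x * z) + k10 * x ^ 3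
        + k12 * z ^ 3) (k2 + k7 * x + k9 * z + k13 * (x * z)) k5 k11 0
        (fun t => w x t z) (fun t => by rw [hw]; ring) t
    have e2 := key (k2 + k7 * x + k9 * z + k13 * (x * z)) (2 * k5) (3 * k11) 0 0 (fun t => qd2 w x t z) (fun t => by rw [e]; ring) y
    exact e2.trans (by ring)
  · intro x y z
    have e : ∀ t, qd3 w x y t = (k3 + k8 * x + k9 * y + k13 * (x * y)) + 2 * k6 * t
        + 3 * k12 * t ^ 2 := fun t =>
      key (k0 + k1 * x + k2 * y + k4 * x ^ 2 + k5 * y ^ 2 + k7 * (x * y) + k10 * x ^ 3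
        + k11 * y ^ 3) (k3 + k8 * x + k9 * y + k13 * (x * y)) k6 k12 0
        (fun t => w x y t) (fun t => by rw [hw]; ring) t
    have e2 := key (k3 + k8 * x + k9 * y + k13 * (x * y)) (2 * k6) (3 * k12) 0 0 (fun t => qd3 w x y t) (fun t => by rw [e]; ring) z
    exact e2.trans (by ring)

/-- Superconvergence of the volume term of the consistency error on one cubic element. -/
theorem stmt_14 :
    ∃ C > (0:ℝ), ∀ h : ℝ, 0 < h → ∀ c1 c2 c3 : ℝ, ∀ u w : ℝ → ℝ → ℝ → ℝ,
      C4Near3 u (c1 - h) (c1 + h) (c2 - h) (c2 + h) (c3 - h) (c3 + h) → MorleyShape3 w →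
      |∫ x in (c1 - h)..(c1 + h), ∫ y in (c2 - h)..(c2 + h), ∫ z in (c3 - h)..(c3 + h),
          qd1 (fun a b c => qd1 (qd1 u) a b c + qd2 (qd2 u) a b c + qd3 (qd3 u) a b c)
              x y z
              * qd1 (fun a b c => w a b c - IK3 w c1 c2 c3 h a b c) x y z
            + qd2 (fun a b c => qd1 (qd1 u) a b c + qd2 (qd2 u) a b c + qd3 (qd3 u) a b c)
              x y z
              * qd2 (fun a b c => w a b c - IK3 w c1 c2 c3 h a b c) x y z
            + qd3 (fun a b c => qd1 (qd1 u) a b c + qd2 (qd2 u) a b c + qd3 (qd3 u) a b c)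
              x y z
              * qd3 (fun a b c => w a b c - IK3 w c1 c2 c3 h a b c) x y z|
        ≤ C * h ^ 2 * semiH4Box u (c1 - h) (c1 + h) (c2 - h) (c2 + h) (c3 - h) (c3 + h) * semiH2Box w (c1 - h) (c1 + h) (c2 - h) (c2 + h) (c3 - h) (c3 + h) := by
  refine ⟨6, by norm_num, ?_⟩
  intro h hh c1 c2 c3 u w hu hw
  obtain ⟨v, V, hv, hV, hKV, huv⟩ := exists_global hh hu
  obtain ⟨a1, b1, a2, b2, a3, b3, hI, w1, w2, w3⟩ := shape_data hw hh c1 c2 c3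
  have hI' : (fun a b c => w a b c - IK3 w c1 c2 c3 h a b c)
      = fun x y z => qq a1 b1 c1 h x + qq a2 b2 c2 h y + qq a3 b3 c3 h z := by
    funext x y z; exact hI x y z
  have i1 : ∀ x y z, qd1 (fun a b c => w a b c - IK3 w c1 c2 c3 h a b c) x y z
      = dqq a1 b1 c1 h x := by
    intro x y z
    rw [hI']
    exact (((qq_hasDerivAt a1 b1 c1 h x).add_const _).add_const _).deriv
  have i2 : ∀ x y z, qd2 (fun a b c => w a b c - IK3 w c1 c2 c3 h a b c) x y z
      = dqq a2 b2 c2 h y := by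
    intro x y z
    rw [hI']
    exact (((qq_hasDerivAt a2 b2 c2 h y).const_add _).add_const _).deriv
  have i3 : ∀ x y z, qd3 (fun a b c => w a b c - IK3 w c1 c2 c3 h a b c) x y z
      = dqq a3 b3 c3 h z := by
    intro x y z
    rw [hI']
    exact ((qq_hasDerivAt a3 b3 c3 h z).const_add _).deriv
  simp only [i1, i2, i3]
  have l1 : c1 - h ≤ c1 + h := by linarith
  have l2 : c2 - h ≤ c2 + h := by linarith
  have l3 : c3 - h ≤ c3 + h := by linarith
  have hL := lap_congr hV huv
  have hJ : J3 (c1 - h) (c1 + h) (c2 - h) (c2 + h) (c3 - h) (c3 + h)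
      (fun x y z => qd1 (Lap u) x y z * dqq a1 b1 c1 h x + qd2 (Lap u) x y z * dqq a2 b2 c2 h y
        + qd3 (Lap u) x y z * dqq a3 b3 c3 h z)
      = J3 (c1 - h) (c1 + h) (c2 - h) (c2 + h) (c3 - h) (c3 + h)
      (fun x y z => qd1 (Lap v) x y z * dqq a1 b1 c1 h x + qd2 (Lap v) x y z * dqq a2 b2 c2 h y
        + qd3 (Lap v) x y z * dqq a3 b3 c3 h z) := by
    apply J3_congr l1 l2 l3
    intro x hx y hy z hz
    have hp := hKV x hx y hy z hz
    rw [hL.d1 hV x y z hp, hL.d2 hV x y z hp, hL.d3 hV x y z hp]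
  have hA : J3 (c1 - h) (c1 + h) (c2 - h) (c2 + h) (c3 - h) (c3 + h) (D4 u)
      = J3 (c1 - h) (c1 + h) (c2 - h) (c2 + h) (c3 - h) (c3 + h) (D4 v) :=
    J3_congr l1 l2 l3 fun x hx y hy z hz => D4_congr hV huv x y z (hKV x hx y hy z hz)
  rw [semiH4Box_eq, semiH2Box_eq, hA]
  change |J3 (c1 - h) (c1 + h) (c2 - h) (c2 + h) (c3 - h) (c3 + h)
      (fun x y z => qd1 (Lap u) x y z * dqq a1 b1 c1 h x + qd2 (Lap u) x y z * dqq a2 b2 c2 h y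
        + qd3 (Lap u) x y z * dqq a3 b3 c3 h z)| ≤ _
  rw [hJ]
  set A := J3 (c1 - h) (c1 + h) (c2 - h) (c2 + h) (c3 - h) (c3 + h) (D4 v) with hAdef
  set B := J3 (c1 - h) (c1 + h) (c2 - h) (c2 + h) (c3 - h) (c3 + h) (D2 w) with hBdef
  have hA0 : 0 ≤ A := by
    have := J3_mono l1 l2 l3 (F := fun _ _ _ => 0) (G := D4 v) continuous_const (D4_cont hv)
      (fun x _ y _ z _ => by unfold D4; positivity)
    rw [J3_const] at this
    simpa using this
  have hB : 32 * h ^ 3 * ((a1 ^ 2 + h ^ 2 * b1 ^ 2) + (a2 ^ 2 + h ^ 2 * b2 ^ 2)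
        + (a3 ^ 2 + h ^ 2 * b3 ^ 2)) ≤ B := by
    have := J3_mono l1 l2 l3 (F := fun x y z => (2 * a1 + 6 * b1 * (x - c1)) ^ 2
        + (2 * a2 + 6 * b2 * (y - c2)) ^ 2 + (2 * a3 + 6 * b3 * (z - c3)) ^ 2) (G := D2 w)
      (by unfold unc3; fun_prop) (D2_cont (shape_smooth hw))
      (fun x _ y _ z _ => by
        simp only [D2, w1, w2, w3]
        nlinarith [sq_nonneg (qd1 (qd2 w) x y z), sq_nonneg (qd1 (qd3 w) x y z),
          sq_nonneg (qd2 (qd3 w) x y z)])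
    rw [J3_quad] at this
    have p : 0 ≤ h ^ 5 * (b1 ^ 2 + b2 ^ 2 + b3 ^ 2) := by positivity
    nlinarith
  have hB0 : 0 ≤ B := le_trans (by positivity) hB
  have fin := amgm_opt (A := 9 * A) (B := h ^ 4 * B) (by positivity) (by positivity)
    (fun t ht => (core (c1 := c1) (c2 := c2) (c3 := c3) (a1 := a1) (a2 := a2) (a3 := a3)
      (b1 := b1) (b2 := b2) (b3 := b3) hh hv ht).trans (by
        refine add_le_add le_rfl (div_le_div_of_nonneg_right ?_ ht.le)
        have h4 : (0 : ℝ) ≤ h ^ 4 := by positivity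
        have := mul_le_mul_of_nonneg_left hB h4
        have h7 : 0 ≤ h ^ 7 * ((a1 ^ 2 + h ^ 2 * b1 ^ 2) + (a2 ^ 2 + h ^ 2 * b2 ^ 2)
          + (a3 ^ 2 + h ^ 2 * b3 ^ 2)) := by positivity
        nlinarith))
  refine fin.trans (le_of_eq ?_)
  rw [Real.sqrt_mul (by norm_num), Real.sqrt_mul (by positivity),
    show (9 : ℝ) = 3 ^ 2 by norm_num, show h ^ 4 = (h ^ 2) ^ 2 by ring,
    Real.sqrt_sq (by norm_num), Real.sqrt_sq (by positivity)]
  ring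
end
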